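/- arXiv:1601.07158 — 3 statements merged into one kernel-verified Lean document; each statement's English description precedes it below -/
import Mathlib

section
/- ℤ_(2) is equal to the set of rational numbers of the form 2(x₁₁ + x₁₂ + y₁₁ + y₁₂) where there exist rationals x_{ij}, y_{ij} (for i ∈ {1,2}, j ∈ {1,2,3,4}) satisfying f_{3,3}(x₁₁,x₁₂,x₁₃,x₁₄)² + f_{3,3}(x₂₁,x₂₂,x₂₃,x₂₄)² + f_{2,5}(y₁₁,y₁₂,y₁₃,y₁₄)² + f_{2,5}(y₂₁,y₂₂,y₂₃,y₂₄)² = 0. -/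
/-- The polynomial `f_{a,b}(x₁,x₂,x₃,x₄) = x₁² − a·x₂² − b·x₃² + a·b·x₄² − 1`. -/
def fab (a b x₁ x₂ x₃ x₄ : ℚ) : ℚ :=
  x₁ ^ 2 - a * x₂ ^ 2 - b * x₃ ^ 2 + a * b * x₄ ^ 2 - 1

/-- `ℤ_(p)` : the set of rational numbers with nonnegative `p`-adic valuation,
i.e. whose denominator is not divisible by `p`, viewed as a subset of `ℚ`. -/
def Zloc (p : ℕ) : Set ℚ := {x : ℚ | ¬ (p ∣ x.den)}

/-- local conditions -/
def Leg (a b : ℤ) : Prop :=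
  Squarefree a ∧ Squarefree b ∧ (0 < a ∨ 0 < b) ∧
  (∀ p : ℕ, p.Prime → (p:ℤ) ∣ b → IsSquare (a : ZMod p)) ∧
  (∀ p : ℕ, p.Prime → (p:ℤ) ∣ a → IsSquare (b : ZMod p)) ∧
  (∀ p : ℕ, p.Prime → ∀ a' b' : ℤ, a = p * a' → b = p * b' → IsSquare ((-(a' * b') : ℤ) : ZMod p))

theorem Leg.symm {a b : ℤ} (h : Leg a b) : Leg b a := by
  obtain ⟨h1, h2, h3, h4, h5, h6⟩ := h
  refine ⟨h2, h1, h3.symm, h5, h4, fun p hp a' b' ha hb => ?_⟩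
  rw [mul_comm a']; exact h6 p hp b' a' hb ha

def Sol (a b : ℤ) : Prop := ∃ x y z : ℤ, (x ≠ 0 ∨ y ≠ 0 ∨ z ≠ 0) ∧ x^2 = a * y^2 + b * z^2

theorem Sol.symm {a b : ℤ} (h : Sol a b) : Sol b a := by
  obtain ⟨x, y, z, h1, h2⟩ := h
  exact ⟨x, z, y, by tauto, by linarith⟩

/-- a square modulo every prime divisor of a squarefree number is a square modulo it -/
theorem sq_mod_squarefree (a : ℤ) (n : ℕ) (hn : Squarefree n)
    (h : ∀ p : ℕ, p.Prime → p ∣ n → IsSquare (a : ZMod p)) : IsSquare (a : ZMod n) := by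
  induction n using Nat.recOnMul with
  | zero => simp at hn
  | one => exact ⟨0, Subsingleton.elim _ _⟩
  | prime p hp => exact h p hp dvd_rfl
  | mul m k ihm ihk =>
    have hc : Nat.Coprime m k := Nat.coprime_of_squarefree_mul hn
    obtain ⟨r, hr⟩ := ihm (hn.of_mul_left) (fun p hp hd => h p hp (hd.mul_right _))
    obtain ⟨s, hs⟩ := ihk (hn.of_mul_right) (fun p hp hd => h p hp (hd.mul_left _))
    let e := ZMod.chineseRemainder hc
    refine ⟨e.symm (r, s), ?_⟩
    apply e.injective
    rw [map_mul, e.apply_symm_apply, map_intCast]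
    ext
    · simpa using hr
    · simpa using hs

theorem isSquare_of_mul_sq {p : ℕ} [Fact p.Prime] (x y c : ZMod p) (hc : c ≠ 0) (h : x * c^2 = y)
    (hy : IsSquare y) : IsSquare x := by
  obtain ⟨r, hr⟩ := hy
  refine ⟨r / c, ?_⟩
  field_simp
  rw [h, hr]; ring

theorem legendre_step {a b b1 c t : ℤ} (h : Leg a b) (hb1 : Squarefree b1)
    (ht : t^2 = a + b * (b1 * c^2)): Leg a b1 := by
  obtain ⟨h1, h2, h3, h4, h5, h6⟩ := h
  have key : ∀ p : ℕ, p.Prime → (p:ℤ) ∣ a → (p:ℤ) ∣ t → ¬ (p:ℤ) ∣ c := by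
    intro p hp ⟨a', ha⟩ ⟨t', ht'⟩ ⟨c', hc⟩
    have : (p:ℤ) * p ∣ a := ⟨t'^2 - b * b1 * c'^2, by
      have : a = t^2 - b * (b1*c^2) := by linarith
      rw [this, ht', hc]; ring⟩
    have := h1 _ this
    exact (Nat.prime_iff_prime_int.mp hp).not_isUnit this
  refine ⟨h1, hb1, ?_, ?_, ?_, ?_⟩
  · by_contra hcon
    push Not at hcon
    have hb : 0 < b := by
      rcases h3 with h | h
      · omega
      · exact h
    have : b * (b1 * c^2) ≤ 0 := by
      have : b1 * c^2 ≤ 0 := mul_nonpos_of_nonpos_of_nonneg hcon.2 (sq_nonneg c)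
      exact mul_nonpos_of_nonneg_of_nonpos hb.le this
    have ha : a ≠ 0 := h1.ne_zero
    have : a < 0 := by omega
    nlinarith [sq_nonneg t]
  · rintro p hp ⟨d, hd⟩
    refine ⟨(t : ZMod p), ?_⟩
    have := congrArg (Int.cast : ℤ → ZMod p) ht
    rw [hd] at this
    push_cast at this
    simp at this
    rw [← this]; ring
  · intro p hp hpa
    have : Fact p.Prime := ⟨hp⟩
    by_cases hpb1 : (p:ℤ) ∣ b1
    · rw [(ZMod.intCast_zmod_eq_zero_iff_dvd b1 p).mpr hpb1]; exact ⟨0, by simp⟩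
    by_cases hpb : (p:ℤ) ∣ b
    · obtain ⟨a', ha⟩ := hpa
      obtain ⟨b', hb⟩ := hpb
      have hpt : (p:ℤ) ∣ t := by
        apply (Nat.prime_iff_prime_int.mp hp).dvd_of_dvd_pow (n := 2)
        rw [ht, ha, hb]; exact ⟨a' + b' * (b1*c^2), by ring⟩
      have hpc := key p hp ⟨a', ha⟩ hpt
      obtain ⟨t', ht'⟩ := hpt
      have hp0 : (p:ℤ) ≠ 0 := by exact_mod_cast hp.ne_zero
      have e : p * t'^2 = a' + b' * (b1 * c^2) := by
        apply mul_left_cancel₀ hp0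
        rw [ht', ha, hb] at ht; linarith
      have e2 := congrArg (Int.cast : ℤ → ZMod p) e
      push_cast at e2
      simp at e2
      have hb' : ((b' : ℤ) : ZMod p) ≠ 0 := by
        rw [Ne, ZMod.intCast_zmod_eq_zero_iff_dvd]
        rintro ⟨b'', hb''⟩
        exact (Nat.prime_iff_prime_int.mp hp).not_isUnit (h2 p ⟨b'', by rw [hb, hb'']; ring⟩)
      have hc' : ((c : ℤ) : ZMod p) ≠ 0 := by
        rwa [Ne, ZMod.intCast_zmod_eq_zero_iff_dvd]
      refine isSquare_of_mul_sq _ _ ((b' : ZMod p) * c) (mul_ne_zero hb' hc') ?_ (h6 p hp a' b' ha hb)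
      push_cast
      linear_combination (-(b' : ZMod p)) * e2
    · have e2 := congrArg (Int.cast : ℤ → ZMod p) ht
      push_cast at e2
      rw [(ZMod.intCast_zmod_eq_zero_iff_dvd a p).mpr hpa] at e2
      have hb' : ((b : ℤ) : ZMod p) ≠ 0 := by
        rwa [Ne, ZMod.intCast_zmod_eq_zero_iff_dvd]
      have hc' : ((c : ℤ) : ZMod p) ≠ 0 := by
        intro hc
        rw [hc] at e2
        have : (t : ZMod p) = 0 := by simpa using e2
        rw [ZMod.intCast_zmod_eq_zero_iff_dvd] at this hc
        exact key p hp hpa this hc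
      refine isSquare_of_mul_sq _ ((b : ZMod p) * t^2) ((b : ZMod p) * c) (mul_ne_zero hb' hc') ?_
        ((h5 p hp hpa).mul (IsSquare.sq _))
      rw [e2]; ring
  · intro p hp a' b' ha hb
    have : Fact p.Prime := ⟨hp⟩
    have hpt : (p:ℤ) ∣ t := by
      apply (Nat.prime_iff_prime_int.mp hp).dvd_of_dvd_pow (n := 2)
      rw [ht, ha, hb]; exact ⟨a' + b * (b'*c^2), by ring⟩
    obtain ⟨t', ht'⟩ := hpt
    have hp0 : (p:ℤ) ≠ 0 := by exact_mod_cast hp.ne_zero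
    have e : p * t'^2 = a' + b * (b' * c^2) := by
      apply mul_left_cancel₀ hp0
      rw [ht', ha, hb] at ht; linarith
    have e2 := congrArg (Int.cast : ℤ → ZMod p) e
    push_cast at e2
    simp at e2
    have : ((-(a' * b') : ℤ) : ZMod p) = b * (b' * c)^2 := by
      push_cast
      linear_combination (b' : ZMod p) * e2
    rw [this]
    exact (h5 p hp ⟨a', ha⟩).mul (IsSquare.sq _)

theorem Int.exists_squarefree_mul_sq (n : ℤ) (hn : n ≠ 0) :
    ∃ m c : ℤ, Squarefree m ∧ c ≠ 0 ∧ n = m * c^2 := by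
  obtain ⟨a, b, h1, h2⟩ := Nat.sq_mul_squarefree n.natAbs
  refine ⟨n.sign * a, b, ?_, ?_, ?_⟩
  · rw [← Int.squarefree_natAbs, Int.natAbs_mul, Int.natAbs_sign_of_ne_zero hn]
    simpa using h2
  · rintro h
    have : b = 0 := by exact_mod_cast h
    subst this
    simp at h1; omega
  · have : (n.natAbs : ℤ) = b^2 * a := by rw [← h1]; push_cast; ring
    calc n = n.sign * n.natAbs := (Int.sign_mul_natAbs n).symm
      _ = _ := by rw [this]; ring

theorem legendre_aux (N : ℕ) : ∀ a b : ℤ, a.natAbs + b.natAbs ≤ N → a.natAbs ≤ b.natAbs →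
    Leg a b → (∀ a b : ℤ, a.natAbs + b.natAbs < N → Leg a b → Sol a b) → Sol a b := by
  intro a b hN hab h ih
  have ha0 : a ≠ 0 := h.1.ne_zero
  have hb0 : b ≠ 0 := h.2.1.ne_zero
  by_cases hb1 : b.natAbs = 1
  · have ha1 : a.natAbs = 1 := by omega
    rcases h.2.2.1 with h' | h'
    · have : a = 1 := by omega
      exact ⟨1, 1, 0, by simp, by rw [this]; ring⟩
    · have : b = 1 := by omega
      exact ⟨1, 0, 1, by simp, by rw [this]; ring⟩
  have hb2 : 2 ≤ b.natAbs := by omega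
  have hsq : IsSquare (a : ZMod b.natAbs) := by
    apply sq_mod_squarefree _ _ (Int.squarefree_natAbs.mpr h.2.1)
    intro p hp hd
    exact h.2.2.2.1 p hp (Int.natCast_dvd.mpr hd)
  obtain ⟨r, hr⟩ := hsq
  have : NeZero b.natAbs := ⟨by omega⟩
  set t := r.valMinAbs with ht
  have hrt : r = (t : ZMod b.natAbs) := (ZMod.coe_valMinAbs r).symm
  have hd : b ∣ t^2 - a := by
    rw [← Int.natAbs_dvd, ← ZMod.intCast_zmod_eq_zero_iff_dvd]
    push_cast
    rw [hr, hrt]; ring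
  have htb : t.natAbs ≤ b.natAbs / 2 := ZMod.natAbs_valMinAbs_le r
  obtain ⟨b', hb'⟩ := hd
  by_cases hb'0 : b' = 0
  · refine ⟨t, 1, 0, by simp, ?_⟩
    rw [hb'0] at hb'; linarith
  obtain ⟨b1, c, hsf, hc0, hbc⟩ := Int.exists_squarefree_mul_sq b' hb'0
  have hlt : b1.natAbs < b.natAbs := by
    have h1 : b1.natAbs ≤ b'.natAbs := by
      apply Nat.le_of_dvd (by omega)
      exact Int.natAbs_dvd_natAbs.mpr ⟨c^2, hbc⟩
    have h2 : b.natAbs * b'.natAbs ≤ t.natAbs^2 + a.natAbs := by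
      rw [← Int.natAbs_mul, ← hb', ← Int.natAbs_pow]
      exact Int.natAbs_sub_le _ _
    by_contra hcon
    push Not at hcon
    have h3 : b.natAbs * b.natAbs ≤ t.natAbs^2 + a.natAbs := by
      nlinarith
    have h4 : 2 * t.natAbs ≤ b.natAbs := by omega
    have h5 := Nat.mul_le_mul h4 h4
    nlinarith
  have hL := legendre_step (c := c) (t := t) h hsf (by rw [← hbc]; linarith)
  obtain ⟨x, y, z, hne, hxyz⟩ := ih a b1 (by omega) hL
  by_cases hz : z = 0
  · exact ⟨x, y, 0, by rw [hz] at hne; exact hne, by rw [hxyz, hz]; ring⟩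
  · refine ⟨x*t + a*y, x + t*y, b1*c*z, ?_, ?_⟩
    · right; right
      exact mul_ne_zero (mul_ne_zero hsf.ne_zero hc0) hz
    · have e : t^2 = a + b * (b1 * c^2) := by rw [← hbc]; linarith
      linear_combination (t^2 - a) * hxyz + b1*z^2 * e

theorem legendre (a b : ℤ) (h : Leg a b) : Sol a b := by
  suffices H : ∀ N : ℕ, ∀ a b : ℤ, a.natAbs + b.natAbs = N → Leg a b → Sol a b from H _ a b rfl h
  intro N
  induction N using Nat.strong_induction_on with
  | _ N ih =>
    intro a b hN h
    have ih' : ∀ a b : ℤ, a.natAbs + b.natAbs < N → Leg a b → Sol a b :=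
      fun a b hlt => ih _ hlt a b rfl
    rcases le_total a.natAbs b.natAbs with hab | hab
    · exact legendre_aux N a b hN.le hab h ih'
    · exact (legendre_aux N b a (by omega) hab h.symm ih').symm

theorem sq_mod_eight (x : ℤ) (hx : x % 2 = 1) : x^2 % 8 = 1 := by
  have h : x^2 % 8 = (x % 8)^2 % 8 := ((Int.mod_modEq x 8).pow 2).symm
  have : x % 8 = 1 ∨ x % 8 = 3 ∨ x % 8 = 5 ∨ x % 8 = 7 := by omega
  rw [h]
  rcases this with h | h | h | h <;> rw [h] <;> norm_num

theorem not_sq_int_of_squarefree (n : ℤ) (h : Squarefree n) (h1 : ¬ IsUnit n) : ¬ IsSquare (n : ℚ) := by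
  rw [Rat.isSquare_intCast_iff]
  rintro ⟨r, hr⟩
  have := h r ⟨1, by rw [hr]; ring⟩
  exact h1 (by rw [hr]; exact this.mul this)

theorem rep_of_leg (N m c : ℤ) (q : ℕ) (hN : N * 2 = m * c^2)
    (h1 : Leg m (10 * q)) (h2 : Leg 2 q) : ∃ u v w : ℚ, (N:ℚ) = 2*u^2 + 10*v^2 - 20*w^2 := by
  obtain ⟨X, Y, Z, hne, hX⟩ := legendre _ _ h1
  obtain ⟨E, F, G, hne', hE⟩ := legendre _ _ h2
  have hXq : (X:ℚ)^2 = m * Y^2 + 10 * q * Z^2 := by exact_mod_cast hX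
  have hEq : (E:ℚ)^2 = 2 * F^2 + q * G^2 := by exact_mod_cast hE
  have hNq : (N:ℚ) * 2 = m * c^2 := by exact_mod_cast hN
  have hG : (G:ℚ) ≠ 0 := by
    intro hG
    rw [hG] at hEq
    by_cases hF : (F:ℚ) = 0
    · rw [hF] at hEq
      have hE0 : (E:ℚ) = 0 := by simpa using hEq
      have a1 : E = 0 := by exact_mod_cast hE0
      have a2 : F = 0 := by exact_mod_cast hF
      have a3 : G = 0 := by exact_mod_cast hG
      tauto
    · apply not_sq_int_of_squarefree 2 h2.1 (by decide)
      refine ⟨E / F, ?_⟩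
      field_simp
      push_cast
      linarith
  by_cases hZ : (Z:ℚ) = 0
  · rw [hZ] at hXq
    have hY : (Y:ℚ) ≠ 0 := by
      intro hY
      rw [hY] at hXq
      have hX0 : (X:ℚ) = 0 := by simpa using hXq
      have a1 : X = 0 := by exact_mod_cast hX0
      have a2 : Y = 0 := by exact_mod_cast hY
      have a3 : Z = 0 := by exact_mod_cast hZ
      tauto
    refine ⟨X * c / (2 * Y), 0, 0, ?_⟩
    field_simp
    linear_combination (Y:ℚ)^2 * hNq - (c:ℚ)^2 * hXq
  have hY : (Y:ℚ) ≠ 0 := by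
    intro hY
    rw [hY] at hXq
    apply not_sq_int_of_squarefree (10 * q) h1.2.1
    · intro hu
      have := Int.isUnit_iff.mp hu
      omega
    refine ⟨X / Z, ?_⟩
    field_simp
    push_cast
    linarith
  refine ⟨c * X / (2 * Y), F * (c * Z / (Y * G)), E * (c * Z / (Y * G)) / 2, ?_⟩
  field_simp
  linear_combination 2 * ((Y:ℚ)^2 * G^2 * hNq - (c:ℚ)^2 * G^2 * hXq + 10 * (c:ℚ)^2 * Z^2 * hEq)

theorem exists_q (μ n : ℕ) (ε : ℕ) (hμ : Odd μ) (h5 : ¬ 5 ∣ μ) (hε : ε = 1 ∨ ε = 7) :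
    ∃ q : ℕ, q.Prime ∧ n < q ∧ q % 8 = ε ∧ (μ : ℤ) ∣ 5 * q - 1 := by
  have hμ0 : μ ≠ 0 := by rintro rfl; simp at hμ
  have c5 : Nat.Coprime 5 μ := (Nat.Prime.coprime_iff_not_dvd (by norm_num)).mpr h5
  have c8 : Nat.Coprime 8 μ := by
    have : Nat.Coprime 2 μ := (Nat.coprime_two_left).mpr hμ
    exact Nat.Coprime.pow_left 3 this
  obtain ⟨s, hs⟩ : ∃ s : ℕ, 5 * s ≡ 1 [MOD μ] := by
    obtain ⟨s, hs⟩ := (ZMod.isUnit_iff_coprime 5 μ).mpr c5 |>.exists_right_inv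
    have : NeZero μ := ⟨hμ0⟩
    refine ⟨s.val, ?_⟩
    rw [← ZMod.natCast_eq_natCast_iff]
    push_cast
    rw [ZMod.natCast_zmod_val]
    exact_mod_cast hs
  obtain ⟨r, hr1, hr2⟩ := Nat.chineseRemainder c8 ε s
  have hr3 : 5 * r ≡ 1 [MOD μ] := (hr2.mul_left 5).trans hs
  have hrμ : Nat.Coprime r μ := by
    have : Nat.Coprime (5 * r) μ := by
      have := hr3.gcd_eq
      rw [Nat.gcd_one_left] at this
      exact this
    exact this.coprime_mul_left
  have hr8 : Nat.Coprime r 8 := by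
    have := hr1.gcd_eq
    rw [Nat.Coprime, this]
    rcases hε with rfl | rfl <;> rfl
  obtain ⟨q, hq1, hq2, hq3⟩ := Nat.forall_exists_prime_gt_and_modEq n (q := 8 * μ) (a := r)
    (by positivity) (Nat.Coprime.mul_right hr8 hrμ)
  refine ⟨q, hq2, hq1, ?_, ?_⟩
  · have h := (hq3.of_mul_right μ).trans hr1
    rw [Nat.ModEq] at h
    rw [h]
    rcases hε with rfl | rfl <;> rfl
  · have h : 5 * q ≡ 1 [MOD μ] := ((hq3.of_mul_left 8).mul_left 5).trans hr3
    have := (Nat.modEq_iff_dvd.mp h.symm)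
    exact_mod_cast this

theorem jac_five (q μ : ℕ) (hμ : Odd μ) (h : (μ : ℤ) ∣ 5 * q - 1) :
    jacobiSym q μ = jacobiSym μ 5 := by
  have e1 : jacobiSym (5 * q) μ = 1 := by
    rw [jacobiSym.mod_left' (a₂ := 1), jacobiSym.one_left]
    exact (Int.modEq_iff_dvd.mpr h).symm
  rw [jacobiSym.mul_left] at e1
  have e2 : jacobiSym ((5:ℕ):ℤ) μ = jacobiSym μ 5 :=
    jacobiSym.quadratic_reciprocity_one_mod_four (by norm_num) hμ
  push_cast at e2
  rw [e2] at e1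
  rcases jacobiSym.trichotomy (μ:ℤ) 5 with h | h | h <;> rw [h] at e1 ⊢ <;> linarith

theorem jac_abs_five (m : ℤ) : jacobiSym (m.natAbs) 5 = jacobiSym m 5 := by
  rcases Int.natAbs_eq m with h | h
  · conv_rhs => rw [h]
  · conv_rhs => rw [h, jacobiSym.neg _ (by decide)]
    have : ZMod.χ₄ ((5:ℕ):ZMod 4) = 1 := by decide
    rw [this]; ring

theorem jac_five_val (m : ℤ) :
    (m % 5 = 1 ∨ m % 5 = 4 → jacobiSym m 5 = 1) ∧ (m % 5 = 2 ∨ m % 5 = 3 → jacobiSym m 5 = -1) := by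
  rw [jacobiSym.mod_left]
  push_cast
  constructor
  · rintro (h | h) <;> rw [h] <;> norm_num
  · rintro (h | h) <;> rw [h] <;> norm_num

theorem jac_one (m : ℤ) (q : ℕ) (hq : q % 8 = 1) (hm : Odd m) (hm5 : m % 5 = 1 ∨ m % 5 = 4)
    (h : (m.natAbs : ℤ) ∣ 5 * q - 1) : jacobiSym m q = 1 := by
  have hμ : Odd m.natAbs := Int.natAbs_odd.mpr hm
  have hqo : Odd q := Nat.odd_iff.mpr (by omega)
  have key : jacobiSym m.natAbs q = 1 := by
    rw [jacobiSym.quadratic_reciprocity_one_mod_four' hμ (by omega), jac_five q _ hμ h, jac_abs_five]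
    exact (jac_five_val m).1 hm5
  rcases Int.natAbs_eq m with h | h
  · rw [h]; exact key
  · rw [h, jacobiSym.neg _ hqo, key, ZMod.χ₄_nat_one_mod_four (by omega)]; rfl

theorem jac_seven (m : ℤ) (q : ℕ) (hq : q % 8 = 7) (hm : m % 8 = 7) (hm5 : m % 5 = 2 ∨ m % 5 = 3)
    (h : (m.natAbs : ℤ) ∣ 5 * q - 1) : jacobiSym m q = 1 := by
  have hμ : Odd m.natAbs := Int.natAbs_odd.mpr (Int.odd_iff.mpr (by omega))
  have hqo : Odd q := Nat.odd_iff.mpr (by omega)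
  have key : jacobiSym q m.natAbs = -1 := by
    rw [jac_five q _ hμ h, jac_abs_five]
    exact (jac_five_val m).2 hm5
  rcases Int.natAbs_eq m with h | h
  · rw [h, jacobiSym.quadratic_reciprocity_three_mod_four (by omega) (by omega), key]; rfl
  · rw [h, jacobiSym.neg _ hqo, ZMod.χ₄_nat_three_mod_four (by omega),
      jacobiSym.quadratic_reciprocity_one_mod_four (by omega) hqo, key]; rfl

theorem isSquare_zmod_two (x : ZMod 2) : IsSquare x := ⟨x, by revert x; decide⟩

theorem leg_two (q : ℕ) (hp : q.Prime) (hq : q % 8 = 1 ∨ q % 8 = 7) : Leg 2 q := by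
  have hq2 : q ≠ 2 := by omega
  refine ⟨Int.prime_two.squarefree, (Nat.prime_iff_prime_int.mp hp).squarefree, Or.inl (by norm_num),
    ?_, ?_, ?_⟩
  · intro p hp' hd
    have : p = q := (Nat.prime_dvd_prime_iff_eq hp' hp).mp (by exact_mod_cast hd)
    subst this
    have : Fact p.Prime := ⟨hp'⟩
    exact_mod_cast (ZMod.exists_sq_eq_two_iff hq2).mpr hq
  · intro p hp' hd
    have : p = 2 := (Nat.prime_dvd_prime_iff_eq hp' Nat.prime_two).mp (by exact_mod_cast hd)
    subst this
    exact isSquare_zmod_two _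
  · intro p hp' a' b' ha hb
    have h1 : p = 2 := (Nat.prime_dvd_prime_iff_eq hp' Nat.prime_two).mp
      (by exact_mod_cast (Dvd.intro _ ha.symm : (p:ℤ) ∣ 2))
    have h2 : p = q := (Nat.prime_dvd_prime_iff_eq hp' hp).mp
      (by exact_mod_cast (Dvd.intro _ hb.symm : (p:ℤ) ∣ q))
    omega

theorem leg_main (m : ℤ) (q : ℕ) (hp : q.Prime) (hq : 5 < q) (hqm : m.natAbs < q)
    (hsf : Squarefree m) (hm5 : m % 5 = 1 ∨ m % 5 = 4) (hmq : IsSquare (m : ZMod q))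
    (h2 : ∀ p : ℕ, p.Prime → p ≠ 2 → (p:ℤ) ∣ m → IsSquare (2 : ZMod p))
    (hd5 : ∀ p : ℕ, p.Prime → p ≠ 2 → (p:ℤ) ∣ m → (p:ℤ) ∣ 5 * q - 1) : Leg m (10 * q) := by
  have cases : ∀ p : ℕ, p.Prime → (p:ℤ) ∣ 10 * q → p = 2 ∨ p = 5 ∨ p = q := by
    intro p hp' hd
    have hd' : p ∣ 2 * 5 * q := by exact_mod_cast hd
    rcases (Nat.Prime.dvd_mul hp').mp hd' with h | h
    · rcases (Nat.Prime.dvd_mul hp').mp h with h | h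
      · left; exact (Nat.prime_dvd_prime_iff_eq hp' Nat.prime_two).mp h
      · right; left; exact (Nat.prime_dvd_prime_iff_eq hp' Nat.prime_five).mp h
    · right; right; exact (Nat.prime_dvd_prime_iff_eq hp' hp).mp h
  refine ⟨hsf, ?_, Or.inr (by omega), ?_, ?_, ?_⟩
  · rw [← Int.squarefree_natAbs]
    have : (10 * (q:ℤ)).natAbs = 10 * q := by omega
    rw [this, Nat.squarefree_mul]
    · exact ⟨by rw [show (10:ℕ) = 2 * 5 from rfl, Nat.squarefree_mul (by norm_num)]; exact ⟨Nat.prime_two.prime.squarefree, Nat.prime_five.prime.squarefree⟩, hp.prime.squarefree⟩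
    · rw [Nat.coprime_comm, Nat.Prime.coprime_iff_not_dvd hp]
      intro h
      have h' : q ∣ 2 * 5 := h
      rcases (Nat.Prime.dvd_mul hp).mp h' with h | h
      · have := Nat.le_of_dvd (by norm_num) h; omega
      · have := Nat.le_of_dvd (by norm_num) h; omega
  · intro p hp' hd
    rcases cases p hp' hd with rfl | rfl | rfl
    · exact isSquare_zmod_two _
    · rcases hm5 with h | h
      · refine ⟨1, ?_⟩
        have : ((m:ℤ) : ZMod 5) = ((1:ℤ) : ZMod 5) := by
          rw [ZMod.intCast_eq_intCast_iff]; exact h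
        rw [this]; decide
      · refine ⟨2, ?_⟩
        have : ((m:ℤ) : ZMod 5) = ((4:ℤ) : ZMod 5) := by
          rw [ZMod.intCast_eq_intCast_iff]; exact h
        rw [this]; decide
    · exact hmq
  · intro p hp' hd
    by_cases hp2 : p = 2
    · subst hp2; exact isSquare_zmod_two _
    have a1 := h2 p hp' hp2 hd
    have a2 := (ZMod.intCast_zmod_eq_zero_iff_dvd _ p).mpr (hd5 p hp' hp2 hd)
    push_cast at a2
    have : ((10 * q : ℤ) : ZMod p) = 2 := by
      push_cast
      linear_combination 2 * a2
    rw [this]; exact a1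
  · intro p hp' a' b' ha hb
    rcases cases p hp' ⟨b', hb⟩ with rfl | rfl | rfl
    · exact isSquare_zmod_two _
    · push_cast at ha; omega
    · exfalso
      have h1 : (p:ℤ) ∣ m := ⟨a', ha⟩
      have h2 := Int.natAbs_dvd_natAbs.mpr h1
      rw [Int.natAbs_natCast] at h2
      have := Nat.le_of_dvd (Int.natAbs_pos.mpr hsf.ne_zero) h2
      omega

theorem rep_main (B D : ℤ) (hc : IsCoprime B D) (hD : D % 2 = 1)
    (h5 : (B^2 - 2*D^2) % 5 = 2 ∨ (B^2 - 2*D^2) % 5 = 3) :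
    ∃ u v w : ℚ, (B:ℚ)^2 - 2 * D^2 = 2*u^2 + 10*v^2 - 20*w^2 := by
  set N := B^2 - 2*D^2 with hN
  have hN0 : N * 2 ≠ 0 := by omega
  obtain ⟨m, c, hsf, hc0, hmc⟩ := Int.exists_squarefree_mul_sq _ hN0
  suffices h : ∃ q : ℕ, Leg m (10 * q) ∧ Leg 2 q by
    obtain ⟨q, h1, h2⟩ := h
    obtain ⟨u, v, w, h⟩ := rep_of_leg N m c q hmc h1 h2
    refine ⟨u, v, w, ?_⟩
    rw [← h, hN]; push_cast; ring
  have hm5 : m % 5 = 1 ∨ m % 5 = 4 := by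
    have e : (m * c^2) % 5 = (m % 5) * ((c % 5)^2) % 5 := by
      exact ((Int.mod_modEq m 5).mul ((Int.mod_modEq c 5).pow 2)).symm
    have e2 : (m * c^2) % 5 = 1 ∨ (m * c^2) % 5 = 4 := by omega
    rw [e] at e2
    have c1 : c % 5 = 0 ∨ c % 5 = 1 ∨ c % 5 = 2 ∨ c % 5 = 3 ∨ c % 5 = 4 := by omega
    rcases c1 with h | h | h | h | h <;> rw [h] at e2 <;> omega
  have h2 : ∀ p : ℕ, p.Prime → p ≠ 2 → (p:ℤ) ∣ m → IsSquare (2 : ZMod p) := by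
    intro p hp hp2 hd
    have : Fact p.Prime := ⟨hp⟩
    have hpi := Nat.prime_iff_prime_int.mp hp
    have hdN : (p:ℤ) ∣ N := by
      have : (p:ℤ) ∣ N * 2 := by rw [hmc]; exact hd.mul_right _
      rcases hpi.dvd_or_dvd this with h | h
      · exact h
      · exact absurd ((Nat.prime_dvd_prime_iff_eq hp Nat.prime_two).mp (by exact_mod_cast h)) hp2
    have hDp : ¬ (p:ℤ) ∣ D := by
      intro hDp
      have : (p:ℤ) ∣ B := by
        apply hpi.dvd_of_dvd_pow (n := 2)
        have : B^2 = N + D * (2 * D) := by rw [hN]; ring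
        rw [this]; exact dvd_add hdN (hDp.mul_right _)
      exact hpi.not_isUnit (hc.isUnit_of_dvd' this hDp)
    have e := (ZMod.intCast_zmod_eq_zero_iff_dvd _ p).mpr hdN
    rw [hN] at e
    push_cast at e
    refine isSquare_of_mul_sq 2 ((B : ZMod p)^2) D ?_ ?_ (IsSquare.sq _)
    · rwa [Ne, ZMod.intCast_zmod_eq_zero_iff_dvd]
    · linear_combination -e
  have sq8 : ∀ x : ℤ, x % 2 = 1 → x^2 % 8 = 1 := sq_mod_eight
  have hD8 := sq8 D hD
  rcases Int.emod_two_eq_zero_or_one B with hB | hB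
  · -- case B even
    obtain ⟨B', rfl⟩ : ∃ B', B = 2 * B' := ⟨B / 2, by omega⟩
    have hmo : m % 2 = 1 := by
      rcases Int.emod_two_eq_zero_or_one c with h | h
      · obtain ⟨c', rfl⟩ : ∃ c', c = 2 * c' := ⟨c / 2, by omega⟩
        have : m * c'^2 = 2 * B'^2 - D^2 := by rw [hN] at hmc; linarith
        rcases Int.emod_two_eq_zero_or_one m with h | h
        · obtain ⟨m', rfl⟩ : ∃ m', m = 2 * m' := ⟨m / 2, by omega⟩
          have : D^2 = 2 * (B'^2 - m' * c'^2) := by linarith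
          omega
        · exact h
      · exfalso
        have hc8 := sq8 c h
        have h4 : (2:ℤ) * 2 ∣ m := by
          have : IsCoprime ((2:ℤ) * 2) (c^2) := by
            have : IsCoprime (2:ℤ) c := (Int.isCoprime_two_left).mpr (Int.odd_iff.mpr h)
            exact (this.mul_left this).pow_right
          apply this.dvd_of_dvd_mul_right
          rw [← hmc, hN]
          exact ⟨2 * B'^2 - D^2, by ring⟩
        exact Int.prime_two.not_isUnit (hsf _ h4)
    obtain ⟨q, hqp, hqn, hq8, hqd⟩ := exists_q m.natAbs (max 5 m.natAbs) 1
      (Int.natAbs_odd.mpr (Int.odd_iff.mpr hmo)) (by omega) (Or.inl rfl)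
    have : Fact q.Prime := ⟨hqp⟩
    refine ⟨q, leg_main m q hqp (by omega) (by omega) hsf hm5 ?_ h2 ?_, leg_two q hqp (Or.inl hq8)⟩
    · exact ZMod.isSquare_of_jacobiSym_eq_one (jac_one m q hq8 (Int.odd_iff.mpr hmo) hm5 hqd)
    · intro p hp hp2 hd
      exact (Int.dvd_natAbs.mpr hd).trans hqd
  · -- case B odd
    have hB8 := sq8 B hB
    have hco : c % 2 = 1 := by
      rcases Int.emod_two_eq_zero_or_one c with h | h
      · obtain ⟨c', rfl⟩ : ∃ c', c = 2 * c' := ⟨c / 2, by omega⟩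
        have : N * 2 = 4 * (m * c'^2) := by rw [hmc]; ring
        omega
      · exact h
    have hc8 := sq8 c hco
    obtain ⟨M, rfl⟩ : ∃ M, m = 2 * M := by
      rcases Int.emod_two_eq_zero_or_one m with h | h
      · exact ⟨m / 2, by omega⟩
      · exfalso
        have := Int.odd_mul.mpr ⟨Int.odd_iff.mpr h, (Int.odd_iff.mpr (by omega) : Odd (c^2))⟩
        rw [← hmc, Int.odd_iff] at this
        omega
    have hM : M * c^2 = N := by linarith
    have hM8 : M % 8 = 7 := by
      have e : (M * c^2) % 8 = M % 8 := by rw [Int.mul_emod, hc8]; omega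
      omega
    obtain ⟨q, hqp, hqn, hq8, hqd⟩ := exists_q M.natAbs (max 5 (2 * M).natAbs) 7
      (Int.natAbs_odd.mpr (Int.odd_iff.mpr (by omega))) (by omega) (Or.inr rfl)
    have : Fact q.Prime := ⟨hqp⟩
    refine ⟨q, leg_main (2 * M) q hqp (by omega) (by omega) hsf hm5 ?_ h2 ?_, leg_two q hqp (Or.inr hq8)⟩
    · push_cast
      apply IsSquare.mul
      · exact (ZMod.exists_sq_eq_two_iff (by omega)).mpr (Or.inr hq8)
      · exact ZMod.isSquare_of_jacobiSym_eq_one (jac_seven M q hq8 hM8 (by omega) hqd)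
    · intro p hp hp2 hd
      have : (p:ℤ) ∣ M := by
        rcases (Nat.prime_iff_prime_int.mp hp).dvd_or_dvd hd with h | h
        · exact absurd ((Nat.prime_dvd_prime_iff_eq hp Nat.prime_two).mp (by exact_mod_cast h)) hp2
        · exact h
      exact (Int.dvd_natAbs.mpr this).trans hqd

theorem mem_Zloc_iff (z : ℚ) : z ∈ Zloc 2 ↔ ∃ n d : ℤ, d % 2 = 1 ∧ z = n / d := by
  constructor
  · intro h
    have h' : ¬ 2 ∣ z.den := h
    exact ⟨z.num, z.den, by omega, (Rat.num_div_den z).symm⟩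
  · rintro ⟨n, d, hd, rfl⟩
    change ¬ 2 ∣ _
    have hd0 : d ≠ 0 := by omega
    obtain ⟨c, -, h2⟩ := Rat.num_den_mk (q := (n:ℚ) / d) hd0 (by rw [Rat.divInt_eq_div])
    rintro ⟨e, he⟩
    rw [he] at h2
    push_cast at h2
    have : d = 2 * (c * e) := by rw [h2]; ring
    omega

theorem Zloc_add {x y : ℚ} (hx : x ∈ Zloc 2) (hy : y ∈ Zloc 2) : x + y ∈ Zloc 2 := by
  rw [mem_Zloc_iff] at *
  obtain ⟨n, d, hd, rfl⟩ := hx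
  obtain ⟨n', d', hd', rfl⟩ := hy
  have h1 : (d:ℚ) ≠ 0 := by exact_mod_cast (by omega : d ≠ 0)
  have h2 : (d':ℚ) ≠ 0 := by exact_mod_cast (by omega : d' ≠ 0)
  refine ⟨n * d' + n' * d, d * d', ?_, ?_⟩
  · rw [Int.mul_emod, hd, hd']; rfl
  · push_cast; field_simp

theorem repB (b : ℚ) (B D : ℤ) (hD : D % 2 = 1) (hb : b = B / D)
    (h5 : (B^2 - 2*D^2) % 5 = 2 ∨ (B^2 - 2*D^2) % 5 = 3) :
    ∃ y₁ y₂ y₃ y₄ : ℚ, b = 2 * (y₁ + y₂) ∧ fab 2 5 y₁ y₂ y₃ y₄ = 0 := by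
  have hd0 : D ≠ 0 := by omega
  obtain ⟨c, h1, h2⟩ := Rat.num_den_mk (q := b) hd0 (by rw [Rat.divInt_eq_div, hb])
  have hden : (b.den : ℤ) % 2 = 1 := by
    rcases Int.emod_two_eq_zero_or_one (b.den : ℤ) with h | h
    · have := Int.mul_emod c b.den 2
      rw [← h2, h] at this
      simp at this; omega
    · exact h
  have h5' : (b.num^2 - 2*(b.den:ℤ)^2) % 5 = 2 ∨ (b.num^2 - 2*(b.den:ℤ)^2) % 5 = 3 := by
    have e : (B^2 - 2*D^2) % 5 = ((b.num^2 - 2*(b.den:ℤ)^2) % 5 * (c % 5)^2) % 5 := by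
      have : B^2 - 2*D^2 = (b.num^2 - 2*(b.den:ℤ)^2) * c^2 := by rw [h1, h2]; ring
      rw [this]
      exact ((Int.mod_modEq _ 5).mul ((Int.mod_modEq c 5).pow 2)).symm
    rw [e] at h5
    have c1 : c % 5 = 0 ∨ c % 5 = 1 ∨ c % 5 = 2 ∨ c % 5 = 3 ∨ c % 5 = 4 := by omega
    rcases c1 with h | h | h | h | h <;> rw [h] at h5 <;> omega
  obtain ⟨u, v, w, h⟩ := rep_main b.num b.den (Rat.isCoprime_num_den b) hden h5'
  have hq : (b.den : ℚ) ≠ 0 := by exact_mod_cast b.den_nz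
  have hbb : (b.num : ℚ) = b * b.den := (Rat.mul_den_eq_num b).symm
  push_cast at h
  rw [hbb] at h
  refine ⟨b + u / b.den, -b/2 - u / b.den, v / b.den, w / b.den, by ring, ?_⟩
  unfold fab
  field_simp
  linear_combination h

theorem repA (r : ℤ) : ∃ x₁ x₂ x₃ x₄ : ℚ, 8 / (-2 - 3 * (r:ℚ)^2) - 2 = 2 * (x₁ + x₂) ∧
    fab 3 3 x₁ x₂ x₃ x₄ = 0 := by
  have hN : (-2 - 3 * (r:ℚ)^2) ≠ 0 := by nlinarith [sq_nonneg (r:ℚ)]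
  refine ⟨2 / (-2 - 3 * (r:ℚ)^2) - 1, 2 / (-2 - 3 * (r:ℚ)^2), 2 * r / (-2 - 3 * (r:ℚ)^2), 0, by ring, ?_⟩
  unfold fab
  field_simp
  ring

theorem sqrt_mod (K : ℕ) (x : ℤ) (hx : (5:ℤ) ∣ x - 1) : ∃ r : ℤ, r % 2 = 1 ∧ (5:ℤ)^(K+1) ∣ r^2 - x := by
  have h := dvd_sub_pow_of_dvd_sub (p := 5) (a := x) (b := 1) (by exact_mod_cast hx) K
  have hodd : Odd (5^K : ℕ) := Odd.pow (by decide)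
  obtain ⟨j, hj⟩ := hodd
  have hr : (5:ℤ)^(K+1) ∣ (x^(j+1))^2 - x := by
    have : (x^(j+1))^2 - x = (x^(5^K) - 1^(5^K)) * x := by rw [hj]; ring
    rw [this]
    exact Dvd.dvd.mul_right (by exact_mod_cast h) _
  have hP : (5:ℤ)^(K+1) % 2 = 1 := Int.odd_iff.mp (Odd.pow (by decide))
  rcases Int.emod_two_eq_zero_or_one (x^(j+1)) with h0 | h0
  · refine ⟨x^(j+1) + 5^(K+1), by omega, ?_⟩
    have : (x^(j+1) + 5^(K+1))^2 - x = ((x^(j+1))^2 - x) + 5^(K+1) * (2 * x^(j+1) + 5^(K+1)) := by ring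
    rw [this]
    exact dvd_add hr (Dvd.intro _ rfl)
  · exact ⟨_, h0, hr⟩

theorem forward (z : ℚ) (hz : ¬ 2 ∣ z.den) : ∃ x₁ x₂ x₃ x₄ y₁ y₂ y₃ y₄ : ℚ,
    z = 2 * (x₁ + x₂ + y₁ + y₂) ∧ fab 3 3 x₁ x₂ x₃ x₄ = 0 ∧ fab 2 5 y₁ y₂ y₃ y₄ = 0 := by
  suffices h : ∃ a : ℚ, (∃ x₁ x₂ x₃ x₄ : ℚ, a = 2 * (x₁ + x₂) ∧ fab 3 3 x₁ x₂ x₃ x₄ = 0) ∧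
      ∃ B D : ℤ, D % 2 = 1 ∧ z - a = B / D ∧
        ((B^2 - 2*D^2) % 5 = 2 ∨ (B^2 - 2*D^2) % 5 = 3) by
    obtain ⟨a, ⟨x₁, x₂, x₃, x₄, ha, hA⟩, B, D, hD, hb, h5⟩ := h
    obtain ⟨y₁, y₂, y₃, y₄, hb, hB⟩ := repB (z - a) B D hD hb h5
    exact ⟨x₁, x₂, x₃, x₄, y₁, y₂, y₃, y₄, by linarith, hA, hB⟩
  have hdq : (z.den : ℚ) ≠ 0 := by exact_mod_cast z.den_nz
  have hzq : (z.num : ℚ) = z * z.den := (Rat.mul_den_eq_num z).symm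
  by_cases h5 : 5 ∣ z.den
  · obtain ⟨k, n, hn5, hkn⟩ := Nat.exists_eq_pow_mul_and_not_dvd z.den_nz 5 (by norm_num)
    have hk : k ≠ 0 := by
      rintro rfl
      apply hn5; simpa [hkn] using h5
    obtain ⟨k', rfl⟩ := Nat.exists_eq_succ_of_ne_zero hk
    set k := k'.succ with hkdef
    set W : ℤ := z.num + 2 * z.den with hW
    have p5 : Prime (5:ℤ) := by norm_num
    have hdd : (5:ℤ) ∣ z.den := by exact_mod_cast h5
    have hW5 : ¬ (5:ℤ) ∣ W := by
      intro h
      have : (5:ℤ) ∣ z.num := by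
        have e : z.num = W - 2 * z.den := by rw [hW]; ring
        rw [e]; exact dvd_sub h (hdd.mul_left _)
      exact p5.not_isUnit ((Rat.isCoprime_num_den z).isUnit_of_dvd' this hdd)
    obtain ⟨V, V', hV⟩ : IsCoprime W ((5:ℤ)^(2*k+1)) :=
      (((p5.coprime_iff_not_dvd).mpr hW5).symm).pow_right
    obtain ⟨T, T', hT⟩ : IsCoprime (3:ℤ) ((5:ℤ)^(2*k+1)) :=
      IsCoprime.pow_right (by norm_num)
    have hV5 : ¬ (5:ℤ) ∣ V := by
      rintro ⟨s, rfl⟩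
      have : (1:ℤ) = 5 * (s * W + V' * 5^(2*k)) := by rw [← hV]; ring
      omega
    set x := T * (-2 - 8 * 5^k * n * V) with hx
    have hx1 : (5:ℤ) ∣ x - 1 := by
      have e1 : T * 3 = 1 - 5 * (T' * 5^(2*k)) := by rw [← hT]; ring
      have e2 : x = -2 * T + 5 * (-8 * 5^k' * n * V * T) := by
        rw [hx, hkdef, pow_succ]; ring
      omega
    obtain ⟨r, hr2, t, hrt⟩ := sqrt_mod (2*k) x hx1
    have hN : (-2 - 3 * r^2) - 8 * 5^k * n * V = 5^(2*k+1) * (-3*t + T'*(-2-8*5^k*n*V)) := by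
      have e1 : r^2 = x + 5^(2*k+1)*t := by linarith
      rw [e1, hx]
      linear_combination (2 + 8 * 5^k * n * V) * hT
    obtain ⟨N', hN'⟩ : ∃ N', -2 - 3*r^2 = 5^k * N' := by
      refine ⟨8 * n * V + 5^(k+1) * (-3*t + T'*(-2-8*5^k*n*V)), ?_⟩
      have : (5:ℤ)^(2*k+1) = 5^k * 5^(k+1) := by rw [← pow_add]; congr 1; omega
      rw [this] at hN
      linear_combination hN
    have h5k : (5:ℤ)^k ≠ 0 := by positivity
    have hP : (5:ℤ)^(2*k+1) = 5^k * (5^k * 5) := by ring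
    have hN2 : N' - 8 * n * V = 5 * (5^k * (-3*t + T'*(-2-8*5^k*n*V))) := by
      apply mul_left_cancel₀ h5k
      rw [hN', hP] at hN
      linear_combination hN
    have hn5' : ¬ (5:ℤ) ∣ n := by exact_mod_cast hn5
    have hN5 : ¬ (5:ℤ) ∣ N' := by
      intro h
      have : (5:ℤ) ∣ 8 * n * V := by
        have e : 8 * n * V = N' - 5 * (5^k * (-3*t + T'*(-2-8*5^k*n*V))) := by linarith
        rw [e]; exact dvd_sub h (Dvd.intro _ rfl)
      rcases p5.dvd_or_dvd this with h | h
      · rcases p5.dvd_or_dvd h with h | h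
        · norm_num at h
        · exact hn5' h
      · exact hV5 h
    obtain ⟨S, hS⟩ : ∃ S, W * N' - 8 * n = 5^k * (5 * S) := by
      refine ⟨W * (-3*t + T'*(-2-8*5^k*n*V)) - 8 * n * V' * 5^k, ?_⟩
      rw [hP] at hV
      linear_combination W * hN2 + 8 * n * hV
    have hden : (z.den : ℤ) = 5^k * n := by exact_mod_cast hkn
    refine ⟨8 / (-2 - 3 * (r:ℚ)^2) - 2, repA r, 5 * S, n * N', ?_, ?_, ?_⟩
    · have h1 : (-2 - 3*r^2) % 2 = 1 := by
        have := sq_mod_eight r hr2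
        omega
      have h3 : (n:ℤ) % 2 = 1 := by
        have : ¬ 2 ∣ n := fun h => hz (hkn ▸ h.mul_left _)
        omega
      have h4 : N' % 2 = 1 := by
        rw [hN'] at h1
        exact Int.odd_iff.mp (Int.odd_mul.mp (Int.odd_iff.mpr h1)).2
      rw [Int.mul_emod, h3, h4]; rfl
    · have q1 : (-2 - 3 * (r:ℚ)^2) = 5^k * N' := by exact_mod_cast hN'
      have q2 : (W:ℚ) * N' - 8 * n = 5^k * (5 * S) := by exact_mod_cast hS
      have q3 : (z.den : ℚ) = 5^k * n := by exact_mod_cast hden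
      have q4 : (W:ℚ) = (z + 2) * (5^k * n) := by
        rw [hW, ← q3]; push_cast; rw [hzq]; ring
      have n1 : (N':ℚ) ≠ 0 := by
        have : N' ≠ 0 := by rintro rfl; simp at hN5
        exact_mod_cast this
      have n2 : (n:ℚ) ≠ 0 := by
        have : n ≠ 0 := by rintro rfl; simp at hn5
        exact_mod_cast this
      have n3 : (5:ℚ)^k ≠ 0 := by positivity
      rw [q1]
      push_cast
      rw [q4] at q2
      field_simp
      linear_combination q2
    · have hD5 : ¬ (5:ℤ) ∣ n * N' := fun h => (p5.dvd_or_dvd h).elim hn5' hN5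
      generalize (n:ℤ) * N' = D at hD5
      have e : ((5 * S)^2 - 2*D^2) % 5 = ((5 * S)^2 - 2*(D%5)^2) % 5 :=
        ((Int.ModEq.refl _).sub ((Int.ModEq.refl 2).mul ((Int.mod_modEq D 5).pow 2))).symm
      have e2 : (5*S)^2 = 5 * (5 * S^2) := by ring
      rw [e, e2]
      have : D % 5 = 1 ∨ D % 5 = 2 ∨ D % 5 = 3 ∨ D % 5 = 4 := by omega
      rcases this with h | h | h | h <;> rw [h] <;> omega
  · have hD5 : (z.den : ℤ) % 5 ≠ 0 := by omega
    have hD2 : (z.den : ℤ) % 2 = 1 := by omega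
    have key : ((z.num - 2 * z.den)^2 - 2 * (z.den:ℤ)^2) % 5 = 2 ∨
        ((z.num - 2 * z.den)^2 - 2 * (z.den:ℤ)^2) % 5 = 3 ∨
        ((z.num + 2 * z.den)^2 - 2 * (z.den:ℤ)^2) % 5 = 2 ∨
        ((z.num + 2 * z.den)^2 - 2 * (z.den:ℤ)^2) % 5 = 3 := by
      generalize (z.den : ℤ) = D at hD5
      generalize z.num = n
      have e1 : ((n - 2 * D)^2 - 2 * D^2) % 5 = ((n%5 - 2 * (D%5))^2 - 2 * (D%5)^2) % 5 :=
        ((((Int.mod_modEq n 5).sub ((Int.ModEq.refl 2).mul (Int.mod_modEq D 5))).pow 2).sub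
          ((Int.ModEq.refl 2).mul ((Int.mod_modEq D 5).pow 2))).symm
      have e2 : ((n + 2 * D)^2 - 2 * D^2) % 5 = ((n%5 + 2 * (D%5))^2 - 2 * (D%5)^2) % 5 :=
        ((((Int.mod_modEq n 5).add ((Int.ModEq.refl 2).mul (Int.mod_modEq D 5))).pow 2).sub
          ((Int.ModEq.refl 2).mul ((Int.mod_modEq D 5).pow 2))).symm
      rw [e1, e2]
      have d : D % 5 = 1 ∨ D % 5 = 2 ∨ D % 5 = 3 ∨ D % 5 = 4 := by omega
      have c1 : n % 5 = 0 ∨ n % 5 = 1 ∨ n % 5 = 2 ∨ n % 5 = 3 ∨ n % 5 = 4 := by omega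
      rcases d with h | h | h | h <;> rcases c1 with h' | h' | h' | h' | h' <;> rw [h, h'] <;> norm_num
    rcases or_assoc.mpr key with h | h
    · refine ⟨2, ⟨1, 0, 0, 0, by norm_num, by norm_num [fab]⟩, z.num - 2 * z.den, z.den, hD2, ?_, h⟩
      push_cast
      rw [hzq]; field_simp
    · refine ⟨-2, ⟨-1, 0, 0, 0, by norm_num, by norm_num [fab]⟩, z.num + 2 * z.den, z.den, hD2, ?_, h⟩
      push_cast
      rw [hzq]; field_simp; ring

theorem descent (Q : ℤ → ℤ → ℤ → ℤ → ℤ)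
    (hom : ∀ x y z w, Q (2*x) (2*y) (2*z) (2*w) = 4 * Q x y z w)
    (H : ∀ x y z w e, Q x y z w = 16 * e → x % 2 = 0 ∧ y % 2 = 0 ∧ z % 2 = 0 ∧ w % 2 = 0)
    (k : ℕ) : ∀ (d x y z w : ℤ), d ≠ 0 → d.natAbs ≤ k → Q x y z w = d^2 →
      2 * ((x:ℚ) / d + (y:ℚ) / d) ∈ Zloc 2 := by
  induction k with
  | zero => intro d _ _ _ _ h0 h; omega
  | succ k ih =>
    intro d x y z w hd0 hdk hQ
    have hdq : (d:ℚ) ≠ 0 := by exact_mod_cast hd0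
    by_cases h4 : d % 4 = 0
    · obtain ⟨e, rfl⟩ : ∃ e, d = 4 * e := ⟨d / 4, by omega⟩
      obtain ⟨hx, hy, hz, hw⟩ := H x y z w (e^2) (by rw [hQ]; ring)
      obtain ⟨x, rfl⟩ : ∃ x', x = 2 * x' := ⟨x / 2, by omega⟩
      obtain ⟨y, rfl⟩ : ∃ x', y = 2 * x' := ⟨y / 2, by omega⟩
      obtain ⟨z, rfl⟩ : ∃ x', z = 2 * x' := ⟨z / 2, by omega⟩
      obtain ⟨w, rfl⟩ : ∃ x', w = 2 * x' := ⟨w / 2, by omega⟩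
      have := ih (2 * e) x y z w (by omega) (by omega) (by rw [hom] at hQ; linarith)
      convert this using 1
      have he : (e:ℚ) ≠ 0 := by exact_mod_cast (by omega : e ≠ 0)
      push_cast
      field_simp
      ring
    · rw [mem_Zloc_iff]
      by_cases h2 : d % 2 = 1
      · exact ⟨2 * (x + y), d, h2, by push_cast; field_simp⟩
      · obtain ⟨e, rfl⟩ : ∃ e, d = 2 * e := ⟨d / 2, by omega⟩
        have he : (e:ℚ) ≠ 0 := by exact_mod_cast (by omega : e ≠ 0)
        exact ⟨x + y, e, by omega, by push_cast; field_simp⟩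

theorem common_den (x y z w : ℚ) : ∃ d a b c e : ℤ, d ≠ 0 ∧ x = a / d ∧ y = b / d ∧ z = c / d ∧ w = e / d := by
  have h1 : (x.den : ℚ) ≠ 0 := by exact_mod_cast x.den_nz
  have h2 : (y.den : ℚ) ≠ 0 := by exact_mod_cast y.den_nz
  have h3 : (z.den : ℚ) ≠ 0 := by exact_mod_cast z.den_nz
  have h4 : (w.den : ℚ) ≠ 0 := by exact_mod_cast w.den_nz
  refine ⟨x.den * y.den * z.den * w.den, x.num * y.den * z.den * w.den, x.den * y.num * z.den * w.den,
    x.den * y.den * z.num * w.den, x.den * y.den * z.den * w.num, ?_, ?_, ?_, ?_, ?_⟩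
  · have := x.den_nz; have := y.den_nz; have := z.den_nz; have := w.den_nz
    positivity
  · conv_lhs => rw [← Rat.num_div_den x]
    push_cast; field_simp
  · conv_lhs => rw [← Rat.num_div_den y]
    push_cast; field_simp
  · conv_lhs => rw [← Rat.num_div_den z]
    push_cast; field_simp
  · conv_lhs => rw [← Rat.num_div_den w]
    push_cast; field_simp

theorem sq_cases (x : ℤ) : (x % 2 = 0 ∧ ∃ k, x^2 = 4 * k ∧ (k % 4 = 0 ∨ k % 4 = 1)) ∨ (x % 2 = 1 ∧ x^2 % 8 = 1) := by
  rcases Int.emod_two_eq_zero_or_one x with h | h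
  · left
    refine ⟨h, (x/2)^2, ?_, ?_⟩
    · obtain ⟨y, rfl⟩ : ∃ y, x = 2 * y := ⟨x / 2, by omega⟩
      rw [Int.mul_ediv_cancel_left _ (by norm_num)]; ring
    · generalize x / 2 = y
      rcases Int.emod_two_eq_zero_or_one y with h | h
      · left
        obtain ⟨t, rfl⟩ : ∃ t, y = 2 * t := ⟨y / 2, by omega⟩
        have : (2*t)^2 = 4 * t^2 := by ring
        omega
      · right
        have := sq_mod_eight y h
        omega
  · right; exact ⟨h, sq_mod_eight x h⟩

theorem backA (x₁ x₂ x₃ x₄ : ℚ) (h : fab 3 3 x₁ x₂ x₃ x₄ = 0) : 2 * (x₁ + x₂) ∈ Zloc 2 := by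
  obtain ⟨d, a, b, c, e, hd, rfl, rfl, rfl, rfl⟩ := common_den x₁ x₂ x₃ x₄
  have hdq : (d:ℚ) ≠ 0 := by exact_mod_cast hd
  refine descent (fun x y z w => x^2 - 3*y^2 - 3*z^2 + 9*w^2) (fun x y z w => by ring) ?_ d.natAbs d a b c e hd le_rfl ?_
  · intro x y z w e h
    rcases sq_cases x with ⟨hx, kx, ex, hx'⟩ | ⟨hx, hx'⟩ <;>
    rcases sq_cases y with ⟨hy, ky, ey, hy'⟩ | ⟨hy, hy'⟩ <;>
    rcases sq_cases z with ⟨hz, kz, ez, hz'⟩ | ⟨hz, hz'⟩ <;>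
    rcases sq_cases w with ⟨hw, kw, ew, hw'⟩ | ⟨hw, hw'⟩ <;>
    omega
  · unfold fab at h
    field_simp at h
    have : (a:ℚ)^2 - 3*b^2 - 3*c^2 + 9*e^2 = d^2 := by linarith
    exact_mod_cast this

theorem backB (x₁ x₂ x₃ x₄ : ℚ) (h : fab 2 5 x₁ x₂ x₃ x₄ = 0) : 2 * (x₁ + x₂) ∈ Zloc 2 := by
  obtain ⟨d, a, b, c, e, hd, rfl, rfl, rfl, rfl⟩ := common_den x₁ x₂ x₃ x₄
  have hdq : (d:ℚ) ≠ 0 := by exact_mod_cast hd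
  refine descent (fun x y z w => x^2 - 2*y^2 - 5*z^2 + 10*w^2) (fun x y z w => by ring) ?_ d.natAbs d a b c e hd le_rfl ?_
  · intro x y z w e h
    rcases sq_cases x with ⟨hx, kx, ex, hx'⟩ | ⟨hx, hx'⟩ <;>
    rcases sq_cases y with ⟨hy, ky, ey, hy'⟩ | ⟨hy, hy'⟩ <;>
    rcases sq_cases z with ⟨hz, kz, ez, hz'⟩ | ⟨hz, hz'⟩ <;>
    rcases sq_cases w with ⟨hw, kw, ew, hw'⟩ | ⟨hw, hw'⟩ <;>
    omega
  · unfold fab at h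
    field_simp at h
    have : (a:ℚ)^2 - 2*b^2 - 5*c^2 + 10*e^2 = d^2 := by linarith
    exact_mod_cast this

/-- `ℤ_(2)` equals the set of rationals of the form
`2(x₁₁ + x₁₂ + y₁₁ + y₁₂)` where
`f₍₃,₃₎(x₁ⱼ)² + f₍₃,₃₎(x₂ⱼ)² + f₍₂,₅₎(y₁ⱼ)² + f₍₂,₅₎(y₂ⱼ)² = 0`. -/
theorem stmt14 :
    Zloc 2 =
      {z : ℚ | ∃ x₁₁ x₁₂ x₁₃ x₁₄ x₂₁ x₂₂ x₂₃ x₂₄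
          y₁₁ y₁₂ y₁₃ y₁₄ y₂₁ y₂₂ y₂₃ y₂₄ : ℚ,
        z = 2 * (x₁₁ + x₁₂ + y₁₁ + y₁₂) ∧
        fab 3 3 x₁₁ x₁₂ x₁₃ x₁₄ ^ 2 + fab 3 3 x₂₁ x₂₂ x₂₃ x₂₄ ^ 2 +
          fab 2 5 y₁₁ y₁₂ y₁₃ y₁₄ ^ 2 + fab 2 5 y₂₁ y₂₂ y₂₃ y₂₄ ^ 2 = 0} := by
  apply Set.Subset.antisymm
  · intro z hz
    obtain ⟨x₁, x₂, x₃, x₄, y₁, y₂, y₃, y₄, h, hA, hB⟩ := forward z hz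
    refine ⟨x₁, x₂, x₃, x₄, 1, 0, 0, 0, y₁, y₂, y₃, y₄, 1, 0, 0, 0, h, ?_⟩
    rw [hA, hB]
    norm_num [fab]
  · rintro z ⟨x₁, x₂, x₃, x₄, a₁, a₂, a₃, a₄, y₁, y₂, y₃, y₄, b₁, b₂, b₃, b₄, rfl, h⟩
    have s1 := sq_nonneg (fab 3 3 x₁ x₂ x₃ x₄)
    have s2 := sq_nonneg (fab 3 3 a₁ a₂ a₃ a₄)
    have s3 := sq_nonneg (fab 2 5 y₁ y₂ y₃ y₄)
    have s4 := sq_nonneg (fab 2 5 b₁ b₂ b₃ b₄)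
    have hA : fab 3 3 x₁ x₂ x₃ x₄ = 0 := pow_eq_zero_iff (two_ne_zero) |>.mp (by linarith)
    have hB : fab 2 5 y₁ y₂ y₃ y₄ = 0 := pow_eq_zero_iff (two_ne_zero) |>.mp (by linarith)
    have := Zloc_add (backA _ _ _ _ hA) (backB _ _ _ _ hB)
    convert this using 1
    ring
end

section
/- Let p be a prime with p ≡ 5 (mod 8). Then ℤ_(p) is equal to the set of rational numbers of the form 2(x₁₁ + x₁₂ + y₁₁ + y₁₂) where there exist rationals x_{ij}, y_{ij} (for i ∈ {1,2}, j ∈ {1,2,3,4}) satisfying f_{−2p,−p}(x₁₁,x₁₂,x₁₃,x₁₄)² + f_{−2p,−p}(x₂₁,x₂₂,x₂₃,x₂₄)² + f_{2p,−p}(y₁₁,y₁₂,y₁₃,y₁₄)² + f_{2p,−p}(y₂₁,y₂₂,y₂₃,y₂₄)² = 0. -/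
lemma aux_sqrt_sq {A : ℕ} {a b : ℕ} (ha : a < Nat.sqrt A + 1) (hb : b < Nat.sqrt A + 1) :
    ((a : ℤ) - b) ^ 2 ≤ A := by
  have h := Nat.sqrt_le' A
  have h' : ((Nat.sqrt A : ℕ) : ℤ) ^ 2 ≤ A := by exact_mod_cast h
  have h0 : |(a : ℤ) - b| ≤ (Nat.sqrt A : ℕ) := by rw [abs_le]; constructor <;> omega
  nlinarith [sq_abs ((a : ℤ) - b), abs_nonneg ((a : ℤ) - b)]

lemma aux_card (N A B C : ℕ) (h : N ^ 2 ≤ A * B * C) :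
    N < (Nat.sqrt A + 1) * ((Nat.sqrt B + 1) * (Nat.sqrt C + 1)) := by
  have hA := Nat.lt_succ_sqrt' A
  have hB := Nat.lt_succ_sqrt' B
  have hC := Nat.lt_succ_sqrt' C
  have : A * B * C < (Nat.sqrt A + 1) ^ 2 * (Nat.sqrt B + 1) ^ 2 * (Nat.sqrt C + 1) ^ 2 :=
    Nat.mul_lt_mul'' (Nat.mul_lt_mul'' hA hB) hC
  refine lt_of_pow_lt_pow_left₀ 2 (by positivity) ?_
  calc _ ≤ _ := h
    _ < _ := this
    _ = _ := by ring

/-- Pigeonhole for three variables. -/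
lemma aux_pigeon {β : Type*} [AddCommGroup β] [Fintype β] (φ : ℤ × ℤ × ℤ →+ β) (A B C : ℕ)
    (h : Fintype.card β < (Nat.sqrt A + 1) * ((Nat.sqrt B + 1) * (Nat.sqrt C + 1))) :
    ∃ x y z : ℤ, (x, y, z) ≠ 0 ∧ φ (x, y, z) = 0 ∧ x ^ 2 ≤ A ∧ y ^ 2 ≤ B ∧ z ^ 2 ≤ C := by
  obtain ⟨u, v, huv, he⟩ := Fintype.exists_ne_map_eq_of_card_lt
    (fun t : Fin (Nat.sqrt A + 1) × Fin (Nat.sqrt B + 1) × Fin (Nat.sqrt C + 1) =>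
      φ (((t.1 : ℕ) : ℤ), ((t.2.1 : ℕ) : ℤ), ((t.2.2 : ℕ) : ℤ))) (by
    simp only [Fintype.card_prod, Fintype.card_fin]
    exact h)
  refine ⟨(u.1 : ℕ) - (v.1 : ℕ), (u.2.1 : ℕ) - (v.2.1 : ℕ), (u.2.2 : ℕ) - (v.2.2 : ℕ), ?_, ?_,
    aux_sqrt_sq u.1.2 v.1.2, aux_sqrt_sq u.2.1.2 v.2.1.2, aux_sqrt_sq u.2.2.2 v.2.2.2⟩
  · intro h0
    apply huv
    simp only [Prod.mk_eq_zero] at h0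
    obtain ⟨h1, h2, h3⟩ := h0
    ext <;> omega
  · have := map_sub φ (((u.1 : ℕ) : ℤ), ((u.2.1 : ℕ) : ℤ), ((u.2.2 : ℕ) : ℤ))
      (((v.1 : ℕ) : ℤ), ((v.2.1 : ℕ) : ℤ), ((v.2.2 : ℕ) : ℤ))
    rw [he, sub_self] at this
    simpa using this

lemma aux_lin (N : ℕ) (a b c : ℤ) : ∃ φ : ℤ × ℤ × ℤ →+ ZMod N,
    ∀ x y z, φ (x, y, z) = ((a * x + b * y + c * z : ℤ) : ZMod N) :=
  ⟨{ toFun := fun t => ((a * t.1 + b * t.2.1 + c * t.2.2 : ℤ) : ZMod N)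
     map_zero' := by simp
     map_add' := by intro s t; push_cast [Prod.fst_add, Prod.snd_add]; ring }, fun _ _ _ => rfl⟩

lemma aux_not_sq {q m : ℕ} (hq : q.Prime) (hm : ¬ q ∣ m) (x : ℤ) : x ^ 2 ≠ (m * q : ℕ) := by
  intro h
  have hqi : Prime (q : ℤ) := Nat.prime_iff_prime_int.mp hq
  have h1 : (q : ℤ) ∣ x := hqi.dvd_of_dvd_pow (n := 2) (h ▸ by push_cast; exact dvd_mul_left _ _)
  obtain ⟨y, rfl⟩ := h1
  apply hm
  have h2 : (m : ℤ) = q * y ^ 2 := by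
    have : (q : ℤ) ≠ 0 := hqi.ne_zero
    apply mul_left_cancel₀ this
    push_cast at h
    linarith
  have : (q : ℤ) ∣ m := ⟨_, h2⟩
  exact_mod_cast this

/-- Primes `≡ 3 mod 8` are of the form `x² + 2y²`. -/
lemma aux_norm (q : ℕ) (hq : q.Prime) (h8 : q % 8 = 3) : ∃ x y : ℤ, (q : ℤ) = x ^ 2 + 2 * y ^ 2 := by
  have := Fact.mk hq
  obtain ⟨r, hr⟩ := (ZMod.exists_sq_eq_neg_two_iff (p := q) (by omega)).2 (Or.inr h8)
  obtain ⟨φ, hφ⟩ := aux_lin q 1 (-(r.val : ℤ)) 0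
  obtain ⟨x, y, z, hne, h0, hx, hy, hz⟩ := aux_pigeon φ q q 0 (by
    have h := Nat.lt_succ_sqrt' q
    simp only [ZMod.card, Nat.sqrt_zero, Nat.succ_eq_add_one, sq] at *
    linarith)
  have hz0 : z = 0 := by
    have : z ^ 2 = 0 := le_antisymm (by exact_mod_cast hz) (sq_nonneg z)
    simpa using this
  subst hz0
  have hx' := lt_of_le_of_ne hx (by simpa using aux_not_sq (m := 1) hq hq.not_dvd_one x)
  have hy' := lt_of_le_of_ne hy (by simpa using aux_not_sq (m := 1) hq hq.not_dvd_one y)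
  have hd : (q : ℤ) ∣ x ^ 2 + 2 * y ^ 2 := by
    rw [← ZMod.intCast_zmod_eq_zero_iff_dvd]
    rw [hφ] at h0
    push_cast at h0 ⊢
    rw [ZMod.natCast_zmod_val] at h0
    linear_combination (x + r * y) * h0 - y ^ 2 * hr
  obtain ⟨t, ht⟩ := hd
  have hq0 : (0 : ℤ) < q := by exact_mod_cast hq.pos
  have hpos : 0 < x ^ 2 + 2 * y ^ 2 := by
    by_contra hcon
    apply hne
    have hx0 : x = 0 := by
      have : x ^ 2 = 0 := by nlinarith [sq_nonneg x, sq_nonneg y]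
      simpa using this
    have hy0 : y = 0 := by
      have : y ^ 2 = 0 := by nlinarith [sq_nonneg x, sq_nonneg y]
      simpa using this
    simp [hx0, hy0]
  have t0 : 0 < t := by
    rw [ht] at hpos
    exact pos_of_mul_pos_right hpos hq0.le
  have t3 : t < 3 := by
    by_contra h
    push Not at h
    nlinarith
  have : t = 1 ∨ t = 2 := by omega
  rcases this with rfl | rfl
  · exact ⟨x, y, by linarith⟩
  · have : Even (x ^ 2) := ⟨q - y ^ 2, by linarith⟩
    rw [Int.even_pow] at this
    obtain ⟨w, rfl⟩ := this.1
    exact ⟨y, w, by linarith⟩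

lemma aux_legendre (M p q n : ℕ) (r : ℤ) (hM : 0 < M) (hp : p.Prime) (hq : q.Prime) (hpq : p ≠ q)
    (hpM : ¬ p ∣ M) (hqM : ¬ q ∣ M) (h1 : (M : ℤ) ∣ p * q + 1) (h2 : (p : ℤ) ∣ M - n ^ 2)
    (h2' : (p : ℤ) ∣ q - 1) (h3 : (q : ℤ) ∣ M * p - r ^ 2) :
    ∃ k d z : ℤ, k ≠ 0 ∧ M * k ^ 2 = p * d ^ 2 + q * z ^ 2 := by
  have := Fact.mk hp
  have := Fact.mk hq
  have : NeZero M := ⟨hM.ne'⟩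
  obtain ⟨φ1, hφ1⟩ := aux_lin M 0 1 (-q)
  obtain ⟨φ2, hφ2⟩ := aux_lin p n 0 (-1)
  obtain ⟨φ3, hφ3⟩ := aux_lin q r (-p) 0
  obtain ⟨k, d, z, hne, h0, hk, hd, hz⟩ := aux_pigeon (φ1.prod (φ2.prod φ3)) (p * q) (M * q) (M * p)
    (by apply aux_card; simp only [Fintype.card_prod, ZMod.card]; apply le_of_eq; ring)
  simp only [AddMonoidHom.prod_apply, Prod.mk_eq_zero, hφ1, hφ2, hφ3,
    ZMod.intCast_zmod_eq_zero_iff_dvd] at h0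
  obtain ⟨d1, d2, d3⟩ := h0
  have hk' : k ^ 2 ≠ (p * q : ℕ) := aux_not_sq hq (fun h => hpq ((Nat.prime_dvd_prime_iff_eq hq hp).1 h).symm) k
  have hd' : d ^ 2 ≠ (M * q : ℕ) := aux_not_sq hq hqM d
  have hk2 := lt_of_le_of_ne hk hk'
  have hd2 := lt_of_le_of_ne hd hd'
  push_cast at hk2 hd2 hz
  have hp0 : (0 : ℤ) < p := by exact_mod_cast hp.pos
  have hq0 : (0 : ℤ) < q := by exact_mod_cast hq.pos
  have hM0 : (0 : ℤ) < M := by exact_mod_cast hM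
  have e1 : (M : ℤ) ∣ M * k ^ 2 - p * d ^ 2 - q * z ^ 2 := by
    obtain ⟨u, hu⟩ := d1
    obtain ⟨w, hw⟩ := h1
    refine ⟨k ^ 2 - p * u * (d + q * z) - w * q * z ^ 2, ?_⟩
    linear_combination (-p * (d + q * z)) * hu - q * z ^ 2 * hw
  have e2 : (p : ℤ) ∣ M * k ^ 2 - p * d ^ 2 - q * z ^ 2 := by
    obtain ⟨u, hu⟩ := d2
    obtain ⟨w, hw⟩ := h2
    obtain ⟨w', hw'⟩ := h2'
    refine ⟨w * k ^ 2 - d ^ 2 + u * (n * k + z) - w' * z ^ 2, ?_⟩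
    linear_combination (n * k + z) * hu + k ^ 2 * hw - z ^ 2 * hw'
  have e3 : (q : ℤ) ∣ M * k ^ 2 - p * d ^ 2 - q * z ^ 2 := by
    have : (q : ℤ) ∣ p * (M * k ^ 2 - p * d ^ 2 - q * z ^ 2) := by
      obtain ⟨u, hu⟩ := d3
      obtain ⟨w, hw⟩ := h3
      refine ⟨w * k ^ 2 + u * (r * k + p * d) - p * z ^ 2, ?_⟩
      linear_combination (r * k + p * d) * hu + k ^ 2 * hw
    refine ((Nat.prime_iff_prime_int.mp hq).dvd_or_dvd this).resolve_left ?_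
    intro h
    exact hpq ((Nat.prime_dvd_prime_iff_eq hq hp).1 (by exact_mod_cast h)).symm
  have cpq : IsCoprime (p : ℤ) q := Nat.isCoprime_iff_coprime.2 ((Nat.coprime_primes hp hq).2 hpq)
  have cpM : IsCoprime (M : ℤ) p :=
    Nat.isCoprime_iff_coprime.2 ((Nat.Prime.coprime_iff_not_dvd hp).2 hpM).symm
  have cqM : IsCoprime (M : ℤ) q :=
    Nat.isCoprime_iff_coprime.2 ((Nat.Prime.coprime_iff_not_dvd hq).2 hqM).symm
  have e : (M : ℤ) * (p * q) ∣ M * k ^ 2 - p * d ^ 2 - q * z ^ 2 :=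
    (cpM.mul_right cqM).mul_dvd e1 (cpq.mul_dvd e2 e3)
  obtain ⟨t, ht⟩ := e
  have hN : (0 : ℤ) < M * (p * q) := by positivity
  have a1 : (M : ℤ) * k ^ 2 < M * (p * q) := by nlinarith
  have a2 : (p : ℤ) * d ^ 2 < M * (p * q) := by nlinarith
  have a3 : (q : ℤ) * z ^ 2 ≤ M * (p * q) := by nlinarith
  have t1 : t < 1 := by
    by_contra h
    push Not at h
    have : 0 ≤ (p : ℤ) * d ^ 2 := by positivity
    have : 0 ≤ (q : ℤ) * z ^ 2 := by positivity
    nlinarith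
  have t2 : -2 < t := by
    by_contra h
    push Not at h
    have : 0 ≤ (M : ℤ) * k ^ 2 := by positivity
    nlinarith
  have ht' : t = 0 ∨ t = -1 := by omega
  rcases ht' with rfl | rfl
  · refine ⟨k, d, z, ?_, by linarith⟩
    rintro rfl
    apply hne
    have b1 : 0 ≤ (p : ℤ) * d ^ 2 := by positivity
    have b2 : 0 ≤ (q : ℤ) * z ^ 2 := by positivity
    have c1 : (p : ℤ) * d ^ 2 = 0 := by nlinarith
    have c2 : (q : ℤ) * z ^ 2 = 0 := by nlinarith
    simp [hp.ne_zero, hq.ne_zero] at c1 c2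
    simp [c1, c2]
  · refine ⟨k ^ 2 + p * q, d * k + q * z, z * k - p * d, by positivity, ?_⟩
    linear_combination (k ^ 2 + p * q) * ht


lemma aux_prime (p M : ℕ) (hp : p.Prime) (h5 : p % 8 = 5) (hM : Odd M) (hpM : ¬ p ∣ M) :
    ∃ q : ℕ, q.Prime ∧ q % 8 = 3 ∧ (p : ℤ) ∣ q - 1 ∧ (M : ℤ) ∣ p * q + 1 := by
  have hpodd : Odd p := by rw [Nat.odd_iff]; omega
  have c1 : IsCoprime (p : ℤ) M :=
    Nat.isCoprime_iff_coprime.2 ((Nat.Prime.coprime_iff_not_dvd hp).2 hpM)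
  have c2 : IsCoprime (8 : ℤ) (p * M) := by
    have : Nat.Coprime 8 (p * M) := by
      rw [show 8 = 2 ^ 3 from rfl]
      exact Nat.Coprime.pow_left 3 (Nat.coprime_two_left.2 (hpodd.mul hM))
    exact_mod_cast Nat.isCoprime_iff_coprime.2 this
  obtain ⟨u, w, huw⟩ := c1
  obtain ⟨s, t, hst⟩ := c2
  set a : ℤ := 3 * (t * (p * M)) + (w * M - u * (u * p)) * (s * 8) with ha
  have a8 : (8 : ℤ) ∣ a - 3 := ⟨-3 * s + (w * M - u * (u * p)) * s, by
    rw [ha]; linear_combination 3 * hst⟩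
  have ap : (p : ℤ) ∣ a - 1 :=
    ⟨3 * (t * M) - u * u * (s * 8) - u * (s * 8) - t * M, by
      rw [ha]; linear_combination hst + s * 8 * huw⟩
  have aM : (M : ℤ) ∣ p * a + 1 :=
    ⟨3 * t * p * p + p * w * (s * 8) + w * (1 + u * p) * (s * 8) + t * p, by
      rw [ha]; linear_combination (- s * 8 * (1 + u * p)) * huw - hst⟩
  have k8 : IsCoprime a 8 := by
    obtain ⟨e, he⟩ := a8
    exact ⟨3, -(1 + 3 * e), by linear_combination 3 * he⟩
  have kp : IsCoprime a p := by
    obtain ⟨e, he⟩ := ap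
    exact ⟨1, -e, by linear_combination he⟩
  have kM : IsCoprime a M := by
    obtain ⟨e, he⟩ := aM
    exact ⟨-p, e, by linear_combination -he⟩
  obtain ⟨q, -, hq, hqa⟩ := Nat.forall_exists_prime_gt_and_zmodEq 0 (q := 8 * (p * M)) (a := a)
    (by have := hp.pos; have := hM.pos; positivity)
    (by push_cast; exact k8.mul_right (kp.mul_right kM))
  have hd : ((8 : ℤ) * (p * M)) ∣ q - a := by
    have := hqa.symm.dvd
    exact_mod_cast this
  refine ⟨q, hq, ?_, ?_, ?_⟩
  · have h1 : (8 : ℤ) ∣ q - a := (Dvd.intro _ rfl).trans hd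
    omega
  · have h1 : (p : ℤ) ∣ q - a := (Dvd.intro (8 * M : ℤ) (by ring) : (p : ℤ) ∣ 8 * (p * M)).trans hd
    have := dvd_add h1 ap
    simpa using this
  · have h1 : (M : ℤ) ∣ q - a := (Dvd.intro_left (8 * p : ℤ) (by ring)).trans hd
    have := dvd_add (Dvd.dvd.mul_left h1 p) aM
    rwa [show (p : ℤ) * q + 1 = p * (q - a) + (p * a + 1) by ring]

open NumberTheorySymbols in
lemma aux_jac (p q M : ℕ) (hp : p.Prime) (h5 : p % 8 = 5) (h3 : q % 8 = 3)
    (hM : Odd M) (hpM : ¬ p ∣ M) (hpq : (p : ℤ) ∣ q - 1) (hMq : (M : ℤ) ∣ p * q + 1) :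
    J(M | q) = J(M | p) ∧ J(p | q) = 1 := by
  have hqodd : Odd q := by rw [Nat.odd_iff]; omega
  have hpodd : Odd p := by rw [Nat.odd_iff]; omega
  constructor
  · have e1 : J((p * q : ℤ) | M) = J(-1 | M) := jacobiSym.mod_left' ((Int.modEq_iff_dvd.2 (by simpa using hMq)).symm)
    rw [jacobiSym.mul_left, jacobiSym.at_neg_one hM,
      jacobiSym.quadratic_reciprocity_one_mod_four (by omega) hM] at e1
    have hsq : J(M | p) ^ 2 = 1 := jacobiSym.sq_one (by
      rw [Int.gcd_natCast_natCast]; exact ((Nat.Prime.coprime_iff_not_dvd hp).2 hpM).symm)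
    rcases Nat.odd_mod_four_iff.mp (Nat.odd_iff.1 hM) with h | h
    · rw [ZMod.χ₄_nat_one_mod_four h] at e1
      rw [jacobiSym.quadratic_reciprocity_one_mod_four h hqodd]
      linear_combination J(M | p) * e1 - J(q | M) * hsq
    · rw [ZMod.χ₄_nat_three_mod_four h] at e1
      rw [jacobiSym.quadratic_reciprocity_three_mod_four h (by omega)]
      linear_combination -J(M | p) * e1 + J(q | M) * hsq
  · rw [jacobiSym.quadratic_reciprocity_one_mod_four (by omega) hqodd]
    rw [jacobiSym.mod_left' (a₂ := 1), jacobiSym.one_left]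
    exact (Int.modEq_iff_dvd.2 hpq).symm


open NumberTheorySymbols in
lemma aux_rep (p M n : ℕ) (hp : p.Prime) (h5 : p % 8 = 5) (hpM : ¬ p ∣ M)
    (hn : (p : ℤ) ∣ M - n ^ 2) (h2 : Odd M ∨ ∃ M', Odd M' ∧ M = 2 * M') :
    ∃ U C D : ℚ, (M : ℚ) = U ^ 2 + 2 * C ^ 2 + p * D ^ 2 := by
  have := Fact.mk hp
  have hJp : J(M | p) = 1 := by
    rw [jacobiSym.mod_left' (a₂ := (n : ℤ) ^ 2) ((Int.modEq_iff_dvd.2 hn).symm)]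
    apply jacobiSym.sq_one'
    rw [Int.gcd_natCast_natCast]
    refine ((Nat.Prime.coprime_iff_not_dvd hp).2 fun h => hpM ?_).symm
    have h1 : (p : ℤ) ∣ (n : ℤ) ^ 2 := Dvd.dvd.pow (by exact_mod_cast h) (by norm_num)
    have := dvd_add hn h1
    rw [sub_add_cancel] at this
    exact_mod_cast this
  have key : ∃ q : ℕ, q.Prime ∧ q % 8 = 3 ∧ (p : ℤ) ∣ q - 1 ∧ (M : ℤ) ∣ p * q + 1 ∧
      J(M | q) = 1 ∧ J(p | q) = 1 := by
    rcases h2 with hM | ⟨M', hM', rfl⟩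
    · obtain ⟨q, hq, h3, hpq, hMq⟩ := aux_prime p M hp h5 hM hpM
      obtain ⟨j1, j2⟩ := aux_jac p q M hp h5 h3 hM hpM hpq hMq
      exact ⟨q, hq, h3, hpq, hMq, j1.trans hJp, j2⟩
    · have hpM' : ¬ p ∣ M' := fun h => hpM (h.mul_left 2)
      obtain ⟨q, hq, h3, hpq, hMq⟩ := aux_prime p M' hp h5 hM' hpM'
      obtain ⟨j1, j2⟩ := aux_jac p q M' hp h5 h3 hM' hpM' hpq hMq
      refine ⟨q, hq, h3, hpq, ?_, ?_, j2⟩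
      · have hodd : Odd (p * q) := Nat.odd_mul.2 ⟨by rw [Nat.odd_iff]; omega, by rw [Nat.odd_iff]; omega⟩
        have h2 : (2 : ℤ) ∣ p * q + 1 := by
          have := hodd.add_one.two_dvd
          exact_mod_cast this
        have hc : IsCoprime (2 : ℤ) M' := by
          exact_mod_cast Nat.isCoprime_iff_coprime.2 (Nat.coprime_two_left.2 hM')
        push_cast
        exact hc.mul_dvd h2 hMq
      · push_cast at hJp ⊢
        rw [jacobiSym.mul_left, jacobiSym.at_two (by rw [Nat.odd_iff]; omega), ZMod.χ₈_nat_eq_if_mod_eight] at hJp ⊢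
        rw [j1]
        have a1 : p % 2 = 1 := by omega
        have a2 : q % 2 = 1 := by omega
        simpa [h5, h3, a1, a2] using hJp
  obtain ⟨q, hq, h3, hpq, hMq, j1, j2⟩ := key
  have := Fact.mk hq
  have hsq : IsSquare ((M * p : ℤ) : ZMod q) := by
    apply ZMod.isSquare_of_jacobiSym_eq_one
    rw [jacobiSym.mul_left, j1, j2, one_mul]
  obtain ⟨r, hr⟩ := hsq
  have hM0 : 0 < M := by
    rcases Nat.eq_zero_or_pos M with h | h
    · exact absurd (h ▸ dvd_zero p) hpM
    · exact h
  have hqM : ¬ q ∣ M := by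
    intro h
    have h1 : (q : ℤ) ∣ p * q + 1 := (Int.natCast_dvd_natCast.2 h).trans hMq
    have h2 : (q : ℤ) ∣ 1 := by
      have := dvd_sub h1 (dvd_mul_left (q : ℤ) p)
      simpa using this
    exact hq.not_dvd_one (by exact_mod_cast h2)
  obtain ⟨k, d, z, hk, he⟩ := aux_legendre M p q n (r.val : ℤ) hM0 hp hq (by rintro rfl; omega) hpM hqM
    hMq hn hpq (by
      rw [← ZMod.intCast_zmod_eq_zero_iff_dvd]
      push_cast at hr ⊢
      rw [ZMod.natCast_zmod_val, hr]; ring)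
  obtain ⟨x, y, hxy⟩ := aux_norm q hq h3
  refine ⟨x * z / k, y * z / k, d / k, ?_⟩
  have hk' : (k : ℚ) ≠ 0 := by exact_mod_cast hk
  have he' : (M : ℚ) * k ^ 2 = p * d ^ 2 + q * z ^ 2 := by exact_mod_cast he
  have hxy' : (q : ℚ) = x ^ 2 + 2 * y ^ 2 := by exact_mod_cast hxy
  field_simp
  rw [he', hxy']
  ring

lemma aux_repv (p : ℕ) (hp : p.Prime) (h5 : p % 8 = 5) (v : ℚ) (hv : v ∈ Zloc p) (hv1 : v ^ 2 ≤ 1) :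
    ∃ U C D : ℚ, 1 + 2 * p * (1 - v ^ 2) = U ^ 2 + 2 * C ^ 2 + p * D ^ 2 := by
  have hn0 : (0 : ℚ) < v.den := by exact_mod_cast v.den_pos
  have hvd : v = v.num / v.den := (Rat.num_div_den v).symm
  have hle : (v.num : ℤ) ^ 2 ≤ (v.den : ℤ) ^ 2 := by
    rw [hvd, div_pow, div_le_one (by positivity)] at hv1
    exact_mod_cast hv1
  have hnz : (0 : ℤ) < v.den := by exact_mod_cast v.den_pos
  have hp0 : (0 : ℤ) < p := by exact_mod_cast hp.pos
  have hpos : 0 ≤ (v.den : ℤ) ^ 2 + 2 * p * ((v.den : ℤ) ^ 2 - v.num ^ 2) := by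
    have : 0 ≤ (v.den : ℤ) ^ 2 - v.num ^ 2 := by linarith
    positivity
  obtain ⟨M, hM⟩ := Int.eq_ofNat_of_zero_le hpos
  have hd : (p : ℤ) ∣ M - (v.den : ℤ) ^ 2 := ⟨2 * ((v.den : ℤ) ^ 2 - v.num ^ 2), by rw [← hM]; ring⟩
  have hpM : ¬ p ∣ M := by
    intro h
    have h1 := dvd_sub (Int.natCast_dvd_natCast.2 h) hd
    rw [sub_sub_cancel] at h1
    have := (Nat.prime_iff_prime_int.mp hp).dvd_of_dvd_pow h1
    exact hv (by exact_mod_cast this)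
  have h2 : Odd M ∨ ∃ M', Odd M' ∧ M = 2 * M' := by
    rcases Nat.even_or_odd v.den with he | ho
    · right
      have hm : Odd v.num := by
        rw [← Int.not_even_iff_odd]
        intro hev
        have h1 : 2 ∣ v.num.natAbs := Int.natCast_dvd.1 (by exact_mod_cast hev.two_dvd)
        have := Nat.dvd_gcd h1 he.two_dvd
        rw [v.reduced] at this
        omega
      obtain ⟨c, hc⟩ := he
      obtain ⟨e, he⟩ := hm
      have hpe : p = 2 * (p / 2) + 1 := by omega
      have hmod : (M : ℤ) % 4 = 2 := by
        rw [← hM, hc, he]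
        obtain ⟨f, hf⟩ : ∃ f : ℤ, (p : ℤ) = 2 * f + 1 := ⟨(p / 2 : ℕ), by exact_mod_cast hpe⟩
        rw [hf]
        push_cast
        ring_nf
        omega
      exact ⟨M / 2, by rw [Nat.odd_iff]; omega, by omega⟩
    · left
      have : Odd (M : ℤ) := by
        rw [← hM]
        apply Odd.add_even
        · exact Odd.pow (by exact_mod_cast ho)
        · rw [mul_assoc]; exact even_two_mul _
      exact_mod_cast this
  obtain ⟨U, C, D, h⟩ := aux_rep p M v.den hp h5 hpM hd h2
  refine ⟨U / v.den, C / v.den, D / v.den, ?_⟩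
  have hM' : (v.den : ℚ) ^ 2 + 2 * p * ((v.den : ℚ) ^ 2 - v.num ^ 2) = M := by exact_mod_cast hM
  rw [h] at hM'
  have hvn : v * v.den = v.num := Rat.mul_den_eq_num v
  field_simp
  rw [← hM', ← hvn]
  ring


lemma aux_zloc {p : ℕ} (hp : p.Prime) {z : ℚ} (a b : ℤ) (hb : ¬ (p : ℤ) ∣ b) (h : z * b = a) :
    z ∈ Zloc p := by
  intro hd
  apply hb
  have hden : z * z.den = z.num := Rat.mul_den_eq_num z
  have hz : (z.den : ℚ) ≠ 0 := by exact_mod_cast z.den_pos.ne'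
  have h1 : z.num * b = a * z.den := by
    have : (z.num : ℚ) * b = a * z.den := by rw [← hden, ← h]; ring
    exact_mod_cast this
  have h2 : (p : ℤ) ∣ z.num * b := h1 ▸ (Int.natCast_dvd_natCast.2 hd).mul_left a
  refine ((Nat.prime_iff_prime_int.mp hp).dvd_or_dvd h2).resolve_left fun h3 => ?_
  have := Nat.dvd_gcd (Int.natCast_dvd.1 h3) hd
  rw [z.reduced] at this
  exact hp.not_dvd_one this

lemma aux_zloc_add {p : ℕ} (hp : p.Prime) {x y : ℚ} (hx : x ∈ Zloc p) (hy : y ∈ Zloc p) :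
    x + y ∈ Zloc p := by
  refine aux_zloc hp (x.num * y.den + y.num * x.den) (x.den * y.den) (fun h => ?_) ?_
  · rcases (Nat.prime_iff_prime_int.mp hp).dvd_or_dvd h with h | h
    · exact hx (by exact_mod_cast h)
    · exact hy (by exact_mod_cast h)
  · push_cast
    rw [← Rat.mul_den_eq_num x, ← Rat.mul_den_eq_num y]
    ring

lemma aux_zloc_mul_int {p : ℕ} (hp : p.Prime) {x : ℚ} (k : ℤ) (hx : x ∈ Zloc p) :
    k * x ∈ Zloc p := by
  refine aux_zloc hp (k * x.num) x.den (fun h => hx (by exact_mod_cast h)) ?_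
  push_cast
  rw [← Rat.mul_den_eq_num x]
  ring

lemma aux_zloc_half {p : ℕ} (hp : p.Prime) (hp2 : p ≠ 2) {x : ℚ} (hx : x ∈ Zloc p) :
    x / 2 ∈ Zloc p := by
  refine aux_zloc hp x.num (2 * x.den) (fun h => ?_) ?_
  · rcases (Nat.prime_iff_prime_int.mp hp).dvd_or_dvd h with h | h
    · exact hp2 ((Nat.prime_dvd_prime_iff_eq hp Nat.prime_two).1 (by exact_mod_cast h))
    · exact hx (by exact_mod_cast h)
  · push_cast
    rw [← Rat.mul_den_eq_num x]
    ring

/-- Descent: anisotropy at `p`. -/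
lemma aux_aniso (p : ℕ) (hp : p.Prime) (c : ℤ)
    (hc : ∀ a b : ℤ, (p : ℤ) ∣ a ^ 2 + c * b ^ 2 → (p : ℤ) ∣ a ∧ (p : ℤ) ∣ b) (N : ℕ) :
    0 < N → ∀ X1 X2 X3 X4 : ℤ,
      X1 ^ 2 + c * p * X2 ^ 2 + p * X3 ^ 2 + c * p ^ 2 * X4 ^ 2 = N ^ 2 →
      ∃ N' Y : ℤ, ¬ (p : ℤ) ∣ N' ∧ (X1 + X2) * N' = Y * N := by
  have hpp := Nat.prime_iff_prime_int.mp hp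
  have hp0 : (p : ℤ) ≠ 0 := hpp.ne_zero
  induction N using Nat.strong_induction_on with
  | _ N ih =>
    intro hN X1 X2 X3 X4 h
    by_cases hpN : p ∣ N
    swap
    · exact ⟨N, X1 + X2, by exact_mod_cast hpN, rfl⟩
    obtain ⟨K, rfl⟩ := hpN
    have hK : 0 < K := Nat.pos_of_mul_pos_left hN
    push_cast at h
    obtain ⟨A1, rfl⟩ : (p : ℤ) ∣ X1 := hpp.dvd_of_dvd_pow (n := 2)
      ⟨p * K ^ 2 - c * X2 ^ 2 - X3 ^ 2 - c * p * X4 ^ 2, by linear_combination h⟩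
    have h' : p * A1 ^ 2 + c * X2 ^ 2 + X3 ^ 2 + c * p * X4 ^ 2 = p * K ^ 2 := by
      apply mul_left_cancel₀ hp0
      linear_combination h
    obtain ⟨⟨A3, rfl⟩, ⟨A2, rfl⟩⟩ := hc X3 X2 ⟨K ^ 2 - A1 ^ 2 - c * X4 ^ 2, by linear_combination h'⟩
    have h'' : A1 ^ 2 + c * p * A2 ^ 2 + p * A3 ^ 2 + c * X4 ^ 2 = K ^ 2 := by
      apply mul_left_cancel₀ hp0
      linear_combination h'
    by_cases hpK : p ∣ K
    swap
    · exact ⟨K, A1 + A2, by exact_mod_cast hpK, by push_cast; ring⟩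
    obtain ⟨⟨B1, hB1⟩, ⟨A4, rfl⟩⟩ := hc A1 X4 (by
      obtain ⟨e, rfl⟩ := hpK
      push_cast at h''
      exact ⟨p * e ^ 2 - c * A2 ^ 2 - A3 ^ 2, by linear_combination h''⟩)
    obtain ⟨N', Y, hN', hY⟩ := ih K (by nlinarith [hp.two_le]) hK A1 A2 A3 A4
      (by linear_combination h'')
    exact ⟨N', Y, hN', by push_cast; linear_combination p * hY⟩

lemma aux_integral (p : ℕ) (hp : p.Prime) (c : ℤ)
    (hc : ∀ a b : ℤ, (p : ℤ) ∣ a ^ 2 + c * b ^ 2 → (p : ℤ) ∣ a ∧ (p : ℤ) ∣ b) (x1 x2 x3 x4 : ℚ)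
    (h : x1 ^ 2 + c * p * x2 ^ 2 + p * x3 ^ 2 + c * p ^ 2 * x4 ^ 2 = 1) : x1 + x2 ∈ Zloc p := by
  set N : ℕ := x1.den * x2.den * x3.den * x4.den with hN
  have hNpos : 0 < N := by
    have := x1.den_pos; have := x2.den_pos; have := x3.den_pos; have := x4.den_pos
    positivity
  have e1 : ((x1.num * (x2.den * x3.den * x4.den) : ℤ) : ℚ) = x1 * N := by
    push_cast [hN]; rw [← Rat.mul_den_eq_num x1]; ring
  have e2 : ((x2.num * (x1.den * x3.den * x4.den) : ℤ) : ℚ) = x2 * N := by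
    push_cast [hN]; rw [← Rat.mul_den_eq_num x2]; ring
  have e3 : ((x3.num * (x1.den * x2.den * x4.den) : ℤ) : ℚ) = x3 * N := by
    push_cast [hN]; rw [← Rat.mul_den_eq_num x3]; ring
  have e4 : ((x4.num * (x1.den * x2.den * x3.den) : ℤ) : ℚ) = x4 * N := by
    push_cast [hN]; rw [← Rat.mul_den_eq_num x4]; ring
  generalize x1.num * (x2.den * x3.den * x4.den) = X1 at e1
  generalize x2.num * (x1.den * x3.den * x4.den) = X2 at e2
  generalize x3.num * (x1.den * x2.den * x4.den) = X3 at e3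
  generalize x4.num * (x1.den * x2.den * x3.den) = X4 at e4
  obtain ⟨N', Y, hN', hY⟩ := aux_aniso p hp c hc N hNpos X1 X2 X3 X4 (by
    have : (X1 : ℚ) ^ 2 + c * p * X2 ^ 2 + p * X3 ^ 2 + c * p ^ 2 * X4 ^ 2 = N ^ 2 := by
      rw [e1, e2, e3, e4]; linear_combination (N : ℚ) ^ 2 * h
    exact_mod_cast this)
  refine aux_zloc hp Y N' hN' ?_
  have hN0 : (N : ℚ) ≠ 0 := by exact_mod_cast hNpos.ne'
  apply mul_right_cancel₀ hN0
  have : ((X1 : ℚ) + X2) * N' = Y * N := by exact_mod_cast hY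
  rw [← this, e1, e2]
  ring

lemma aux_hc (p : ℕ) (hp : p.Prime) (h5 : p % 8 = 5) (c : ℤ) (hc : c = 2 ∨ c = -2) (a b : ℤ)
    (h : (p : ℤ) ∣ a ^ 2 + c * b ^ 2) : (p : ℤ) ∣ a ∧ (p : ℤ) ∣ b := by
  have := Fact.mk hp
  refine jacobiSym.prime_dvd_of_eq_neg_one (a := -c) ?_ (by rwa [neg_mul, sub_neg_eq_add])
  rw [ZMod.nonsquare_iff_jacobiSym_eq_neg_one]
  rcases hc with rfl | rfl
  · push_cast
    rw [ZMod.exists_sq_eq_neg_two_iff (by omega)]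
    omega
  · push_cast
    rw [ZMod.exists_sq_eq_two_iff (by omega)]
    omega

lemma aux_x (p : ℕ) (v U C D : ℚ) (hp : 0 < p)
    (h : 1 + 2 * p * (1 - v ^ 2) = U ^ 2 + 2 * C ^ 2 + p * D ^ 2) :
    ∃ x1 x2 x3 x4 : ℚ, x1 + x2 = v ∧ fab (-2 * (p : ℚ)) (-(p : ℚ)) x1 x2 x3 x4 = 0 := by
  have hp0 : (0 : ℚ) < p := by exact_mod_cast hp
  have h1 : (1 + 2 * p : ℚ) ≠ 0 := by positivity
  refine ⟨(2 * p * v + U) / (1 + 2 * p), (v - U) / (1 + 2 * p), (D - 2 * C) / (1 + 2 * p),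
    (D + C / p) / (1 + 2 * p), by field_simp; ring, ?_⟩
  unfold fab
  field_simp
  linear_combination (-(1 + 2 * p)) * h

lemma aux_y (p : ℕ) (v D : ℚ) (hp : 0 < p) (h : D ^ 2 = 2 * (v ^ 2 - 1)) :
    ∃ x1 x2 x3 x4 : ℚ, x1 + x2 = v ∧ fab (2 * (p : ℚ)) (-(p : ℚ)) x1 x2 x3 x4 = 0 := by
  have hp0 : (1 : ℚ) ≤ p := by exact_mod_cast hp
  have h1 : (2 * p - 1 : ℚ) ≠ 0 := by linarith
  refine ⟨(2 * p * v - 1) / (2 * p - 1), (1 - v) / (2 * p - 1), D / (2 * p - 1), D / (2 * p - 1),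
    by field_simp; ring, ?_⟩
  unfold fab
  field_simp
  linear_combination (-(p * (2 * p - 1) : ℚ)) * h

/-- Approximation step for the indefinite form. -/
lemma aux_split (v : ℚ) : ∃ w D : ℚ, D ^ 2 = 2 * (w ^ 2 - 1) ∧ (v - w) ^ 2 ≤ 1 := by
  wlog hv : 0 ≤ v generalizing v
  · obtain ⟨w, D, h1, h2⟩ := this (-v) (by linarith)
    exact ⟨-w, D, by rw [h1]; ring, by linarith [show (v - -w) ^ 2 = (-v - w) ^ 2 by ring]⟩
  by_cases h2 : v ≤ 2
  · exact ⟨1, 0, by norm_num, by nlinarith⟩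
  push Not at h2
  have hlt : (2 + 4 / v : ℝ) < 2 + 4 / (v - 2) := by
    have : (2 : ℝ) < v := by exact_mod_cast h2
    have : (4 / v : ℝ) < 4 / (v - 2) := by
      apply div_lt_div_of_pos_left <;> linarith
    linarith
  have hv2 : (2 : ℝ) < v := by exact_mod_cast h2
  obtain ⟨t, ht1, ht2⟩ := exists_rat_btwn (Real.sqrt_lt_sqrt (by positivity) hlt)
  have ht0 : (0 : ℝ) < t := lt_of_le_of_lt (Real.sqrt_nonneg _) ht1
  rw [Real.sqrt_lt' ht0] at ht1
  rw [Real.lt_sqrt ht0.le] at ht2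
  have g1 : 2 + 4 / v < t ^ 2 := by exact_mod_cast ht1
  have g2 : t ^ 2 < 2 + 4 / (v - 2) := by exact_mod_cast ht2
  have p1 : 0 < 4 / v := by positivity
  have hpos : 0 < t ^ 2 - 2 := by linarith
  have k1 : 4 / (t ^ 2 - 2) < v := by
    rw [div_lt_iff₀ hpos]
    have : 4 / v < t ^ 2 - 2 := by linarith
    rw [div_lt_iff₀ (by linarith)] at this
    linarith
  have k2 : v - 2 < 4 / (t ^ 2 - 2) := by
    rw [lt_div_iff₀ hpos]
    have : t ^ 2 - 2 < 4 / (v - 2) := by linarith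
    rw [lt_div_iff₀ (by linarith)] at this
    linarith
  refine ⟨1 + 4 / (t ^ 2 - 2), 4 * t / (t ^ 2 - 2), ?_, ?_⟩
  · have := hpos.ne'
    field_simp
    ring
  · rw [sq_le_one_iff_abs_le_one, abs_le]
    constructor <;> linarith


/-- For a prime `p ≡ 5 (mod 8)`, `ℤ_(p)` equals the set of
rationals of the form `2(x₁₁ + x₁₂ + y₁₁ + y₁₂)` where
`f₍₋₂p,₋p₎(x₁ⱼ)² + f₍₋₂p,₋p₎(x₂ⱼ)² + f₍₂p,₋p₎(y₁ⱼ)² + f₍₂p,₋p₎(y₂ⱼ)² = 0`. -/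
theorem stmt16 (p : ℕ) (hp : p.Prime) (hmod : p % 8 = 5) :
    Zloc p =
      {z : ℚ | ∃ x₁₁ x₁₂ x₁₃ x₁₄ x₂₁ x₂₂ x₂₃ x₂₄
          y₁₁ y₁₂ y₁₃ y₁₄ y₂₁ y₂₂ y₂₃ y₂₄ : ℚ,
        z = 2 * (x₁₁ + x₁₂ + y₁₁ + y₁₂) ∧
        fab (-2 * (p : ℚ)) (-(p : ℚ)) x₁₁ x₁₂ x₁₃ x₁₄ ^ 2 +
          fab (-2 * (p : ℚ)) (-(p : ℚ)) x₂₁ x₂₂ x₂₃ x₂₄ ^ 2 +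
          fab (2 * (p : ℚ)) (-(p : ℚ)) y₁₁ y₁₂ y₁₃ y₁₄ ^ 2 +
          fab (2 * (p : ℚ)) (-(p : ℚ)) y₂₁ y₂₂ y₂₃ y₂₄ ^ 2 = 0} := by
  have hp0 := hp.pos
  have hfx : ∀ x1 x2 x3 x4 : ℚ, fab (-2 * (p : ℚ)) (-(p : ℚ)) x1 x2 x3 x4 = 0 → x1 + x2 ∈ Zloc p := by
    intro x1 x2 x3 x4 h
    refine aux_integral p hp 2 (aux_hc p hp hmod 2 (Or.inl rfl)) x1 x2 x3 x4 ?_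
    unfold fab at h
    push_cast
    linear_combination h
  have hfy : ∀ x1 x2 x3 x4 : ℚ, fab (2 * (p : ℚ)) (-(p : ℚ)) x1 x2 x3 x4 = 0 → x1 + x2 ∈ Zloc p := by
    intro x1 x2 x3 x4 h
    refine aux_integral p hp (-2) (aux_hc p hp hmod (-2) (Or.inr rfl)) x1 x2 x3 x4 ?_
    unfold fab at h
    push_cast
    linear_combination h
  ext z
  constructor
  · intro hz
    have hv : z / 2 ∈ Zloc p := aux_zloc_half hp (by omega) hz
    obtain ⟨w, E, hE, hw⟩ := aux_split (z / 2)
    obtain ⟨y1, y2, y3, y4, hy, hfy0⟩ := aux_y p w E hp0 hE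
    have hwz : w ∈ Zloc p := hy ▸ hfy _ _ _ _ hfy0
    have hv1 : z / 2 - w ∈ Zloc p := by
      have := aux_zloc_add hp hv (aux_zloc_mul_int hp (-1) hwz)
      simpa [sub_eq_add_neg] using this
    obtain ⟨U, C, D, hU⟩ := aux_repv p hp hmod _ hv1 hw
    obtain ⟨x1, x2, x3, x4, hx, hfx0⟩ := aux_x p _ U C D hp0 hU
    refine ⟨x1, x2, x3, x4, 1, 0, 0, 0, y1, y2, y3, y4, 1, 0, 0, 0, by linarith, ?_⟩
    rw [hfx0, hfy0]
    simp [fab]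
  · rintro ⟨x1, x2, x3, x4, a1, a2, a3, a4, y1, y2, y3, y4, b1, b2, b3, b4, rfl, h⟩
    have g1 : fab (-2 * (p : ℚ)) (-(p : ℚ)) x1 x2 x3 x4 = 0 := by
      rw [← sq_eq_zero_iff]
      refine le_antisymm ?_ (sq_nonneg _)
      rw [← h]
      linarith [sq_nonneg (fab (-2 * (p : ℚ)) (-(p : ℚ)) a1 a2 a3 a4),
        sq_nonneg (fab (2 * (p : ℚ)) (-(p : ℚ)) y1 y2 y3 y4),
        sq_nonneg (fab (2 * (p : ℚ)) (-(p : ℚ)) b1 b2 b3 b4)]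
    have g2 : fab (2 * (p : ℚ)) (-(p : ℚ)) y1 y2 y3 y4 = 0 := by
      rw [← sq_eq_zero_iff]
      refine le_antisymm ?_ (sq_nonneg _)
      rw [← h]
      linarith [sq_nonneg (fab (-2 * (p : ℚ)) (-(p : ℚ)) a1 a2 a3 a4),
        sq_nonneg (fab (-2 * (p : ℚ)) (-(p : ℚ)) x1 x2 x3 x4),
        sq_nonneg (fab (2 * (p : ℚ)) (-(p : ℚ)) b1 b2 b3 b4)]
    have := aux_zloc_mul_int hp 2 (aux_zloc_add hp (hfx _ _ _ _ g1) (hfy _ _ _ _ g2))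
    rw [← add_assoc] at this
    exact_mod_cast this
end

section
/- Let p be a prime with p ≡ 7 (mod 8). Then ℤ_(p) is equal to the set of rational numbers of the form 2(x₁₁ + x₁₂ + y₁₁ + y₁₂) where there exist rationals x_{ij}, y_{ij} (for i ∈ {1,2}, j ∈ {1,2,3,4}) satisfying f_{−1,−p}(x₁₁,x₁₂,x₁₃,x₁₄)² + f_{−1,−p}(x₂₁,x₂₂,x₂₃,x₂₄)² + f_{2p,p}(y₁₁,y₁₂,y₁₃,y₁₄)² + f_{2p,p}(y₂₁,y₂₂,y₂₃,y₂₄)² = 0. -/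
lemma box_aux (n : ℕ) (hn : 0 < n) : ∃ X : ℕ, n ≤ X ^ 2 ∧ ∀ d : ℤ, |d| < X → d ^ 2 < n := by
  refine ⟨Nat.sqrt (n - 1) + 1, ?_, ?_⟩
  · have := Nat.lt_succ_sqrt (n - 1)
    simp only [Nat.succ_eq_add_one] at this
    rw [pow_two]; omega
  · intro d hd
    have h1 : |d| ≤ Nat.sqrt (n - 1) := by push_cast at hd; omega
    have h2 : Nat.sqrt (n - 1) * Nat.sqrt (n - 1) ≤ n - 1 := Nat.sqrt_le (n - 1)
    have h3 : (Nat.sqrt (n - 1) : ℤ) * Nat.sqrt (n - 1) + 1 ≤ n := by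
      have : Nat.sqrt (n - 1) * Nat.sqrt (n - 1) + 1 ≤ n := by omega
      exact_mod_cast this
    have := abs_nonneg d
    rw [← sq_abs]; nlinarith

lemma legendre_aux_s17 (a b c : ℕ) (ha : 0 < a) (hb : 0 < b) (hc : 0 < c)
    (hab : Nat.Coprime a b) (hac : Nat.Coprime a c) (hbc : Nat.Coprime b c) (k l m : ℤ)
    (h1 : (a : ℤ) ∣ b * k ^ 2 - c) (h2 : (b : ℤ) ∣ a * l ^ 2 - c) (h3 : (c : ℤ) ∣ a * m ^ 2 + b) :
    ∃ x y z : ℤ, ¬ (x = 0 ∧ y = 0 ∧ z = 0) ∧ a * x ^ 2 + b * y ^ 2 = c * z ^ 2 := by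
  have : NeZero a := ⟨ha.ne'⟩
  have : NeZero b := ⟨hb.ne'⟩
  have : NeZero c := ⟨hc.ne'⟩
  obtain ⟨X, hX, hX'⟩ := box_aux (b * c) (by positivity)
  obtain ⟨Y, hY, hY'⟩ := box_aux (a * c) (by positivity)
  obtain ⟨Z, hZ, hZ'⟩ := box_aux (a * b) (by positivity)
  by_cases hsq : b * c = X ^ 2
  · refine ⟨0, c, X, by simp [hc.ne'], ?_⟩
    have : (b : ℤ) * c = X ^ 2 := by exact_mod_cast hsq
    rw [← this]; ring
  have hXlt : b * c < X ^ 2 := lt_of_le_of_ne hX hsq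
  have hcard : a * b * c < X * Y * Z := by
    have : (a * b * c) ^ 2 < (X * Y * Z) ^ 2 := by
      calc (a * b * c) ^ 2 = (b * c) * ((a * c) * (a * b)) := by ring
        _ < X ^ 2 * ((a * c) * (a * b)) := by
          apply Nat.mul_lt_mul_of_pos_right hXlt; positivity
        _ ≤ X ^ 2 * (Y ^ 2 * Z ^ 2) := by gcongr
        _ = _ := by ring
    exact lt_of_pow_lt_pow_left₀ 2 (by positivity) this
  let S : Finset (ℕ × ℕ × ℕ) := Finset.range X ×ˢ Finset.range Y ×ˢ Finset.range Z
  let f : ℕ × ℕ × ℕ → ZMod a × ZMod b × ZMod c := fun v =>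
    (((v.2.1 : ℤ) - k * (v.2.2 : ℤ) : ℤ), ((v.1 : ℤ) - l * (v.2.2 : ℤ) : ℤ),
      ((v.1 : ℤ) - m * (v.2.1 : ℤ) : ℤ))
  obtain ⟨u, hu, v, hv, huv, hf⟩ := Finset.exists_ne_map_eq_of_card_lt_of_maps_to
    (s := S) (t := Finset.univ) (f := f) (by
      simp [S, Fintype.card_prod, ZMod.card]; nlinarith) (by intro x _; simp)
  obtain ⟨u1, u2, u3⟩ := u
  obtain ⟨v1, v2, v3⟩ := v
  simp only [f, Prod.mk.injEq] at hf
  obtain ⟨e1, e2, e3⟩ := hf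
  rw [ZMod.intCast_eq_intCast_iff_dvd_sub] at e1 e2 e3
  simp only [S, Finset.mem_product, Finset.mem_range] at hu hv
  obtain ⟨x, hx⟩ : ∃ x : ℤ, x = v1 - u1 := ⟨_, rfl⟩
  obtain ⟨y, hy⟩ : ∃ x : ℤ, x = v2 - u2 := ⟨_, rfl⟩
  obtain ⟨z, hz⟩ : ∃ x : ℤ, x = v3 - u3 := ⟨_, rfl⟩
  have bx := hX' x (by rw [abs_lt]; omega)
  have byy := hY' y (by rw [abs_lt]; omega)
  have bz := hZ' z (by rw [abs_lt]; omega)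
  have hne : ¬ (x = 0 ∧ y = 0 ∧ z = 0) := by
    rintro ⟨h1, h2, h3⟩
    apply huv
    simp only [Prod.mk.injEq]
    omega
  replace e1 : (a : ℤ) ∣ y - k * z := by convert e1 using 1; rw [hy, hz]; ring
  replace e2 : (b : ℤ) ∣ x - l * z := by convert e2 using 1; rw [hx, hz]; ring
  replace e3 : (c : ℤ) ∣ x - m * y := by convert e3 using 1; rw [hx, hy]; ring
  have da : (a : ℤ) ∣ a * x ^ 2 + b * y ^ 2 - c * z ^ 2 := by
    have : (a : ℤ) * x ^ 2 + b * y ^ 2 - c * z ^ 2 =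
      a * x ^ 2 + (y - k * z) * (b * (y + k * z)) + (b * k ^ 2 - c) * z ^ 2 := by ring
    rw [this]
    exact dvd_add (dvd_add (Dvd.intro _ rfl) (e1.mul_right _)) (h1.mul_right _)
  have db : (b : ℤ) ∣ a * x ^ 2 + b * y ^ 2 - c * z ^ 2 := by
    have : (a : ℤ) * x ^ 2 + b * y ^ 2 - c * z ^ 2 =
      b * y ^ 2 + (x - l * z) * (a * (x + l * z)) + (a * l ^ 2 - c) * z ^ 2 := by ring
    rw [this]
    exact dvd_add (dvd_add (Dvd.intro _ rfl) (e2.mul_right _)) (h2.mul_right _)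
  have dc : (c : ℤ) ∣ a * x ^ 2 + b * y ^ 2 - c * z ^ 2 := by
    have : (a : ℤ) * x ^ 2 + b * y ^ 2 - c * z ^ 2 =
      c * (-z ^ 2) + (x - m * y) * (a * (x + m * y)) + (a * m ^ 2 + b) * y ^ 2 := by ring
    rw [this]
    exact dvd_add (dvd_add (Dvd.intro _ rfl) (e3.mul_right _)) (h3.mul_right _)
  have dabc : (a : ℤ) * b * c ∣ a * x ^ 2 + b * y ^ 2 - c * z ^ 2 := by
    apply IsCoprime.mul_dvd _ (IsCoprime.mul_dvd (Nat.isCoprime_iff_coprime.mpr hab) da db) dc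
    exact IsCoprime.mul_left (Nat.isCoprime_iff_coprime.mpr hac)
      (Nat.isCoprime_iff_coprime.mpr hbc)
  obtain ⟨j, hj⟩ := dabc
  have ha' : (0 : ℤ) < a := by exact_mod_cast ha
  have hb' : (0 : ℤ) < b := by exact_mod_cast hb
  have hc' : (0 : ℤ) < c := by exact_mod_cast hc
  push_cast at bx byy bz
  have bx2 : (a : ℤ) * x ^ 2 < a * b * c := by
    have := mul_lt_mul_of_pos_left bx ha'; linarith
  have by2 : (b : ℤ) * y ^ 2 < a * b * c := by
    have := mul_lt_mul_of_pos_left byy hb'; linarith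
  have bz2 : (c : ℤ) * z ^ 2 < a * b * c := by
    have := mul_lt_mul_of_pos_left bz hc'; linarith
  have px : (0 : ℤ) ≤ a * x ^ 2 := by positivity
  have py : (0 : ℤ) ≤ b * y ^ 2 := by positivity
  have pz : (0 : ℤ) ≤ c * z ^ 2 := by positivity
  have pabc : (0 : ℤ) < a * b * c := by positivity
  have hj1 : j < 2 := by
    by_contra! h
    have := mul_le_mul_of_nonneg_left h pabc.le
    linarith
  have hj2 : -1 < j := by
    by_contra! h
    have := mul_le_mul_of_nonneg_left h pabc.le
    linarith
  have : j = 0 ∨ j = 1 := by omega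
  rcases this with rfl | rfl
  · exact ⟨x, y, z, hne, by linarith⟩
  · refine ⟨x * z + b * y, y * z - a * x, z ^ 2 + a * b, ?_, ?_⟩
    · rintro ⟨-, -, h⟩
      have : (0 : ℤ) < z ^ 2 + a * b := by positivity
      omega
    · linear_combination ((z : ℤ) ^ 2 + a * b) * hj

lemma sq_two_pow (a : ℤ) (h : (8 : ℤ) ∣ 1 - a) (M : ℕ) :
    ∃ r : ℤ, (2 : ℤ) ^ (M + 3) ∣ r ^ 2 - a := by
  induction M with
  | zero => exact ⟨1, by simpa using h⟩
  | succ M ih =>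
    obtain ⟨r, j, hj⟩ := ih
    have hr : Odd r := by
      obtain ⟨i, hi⟩ := h
      by_contra hr
      rw [Int.not_odd_iff_even] at hr
      obtain ⟨s, rfl⟩ := hr
      rw [pow_add] at hj
      ring_nf at hj
      omega
    obtain ⟨s, rfl⟩ := hr
    rcases Int.even_or_odd' j with ⟨i, rfl | rfl⟩
    · exact ⟨2 * s + 1, i, by rw [hj]; ring⟩
    · refine ⟨2 * s + 1 + 2 ^ (M + 2), i + s + 1 + 2 ^ M, ?_⟩
      have : (2 * s + 1 + 2 ^ (M + 2)) ^ 2 - a = ((2 * s + 1) ^ 2 - a) +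
        (2 * s + 1) * 2 ^ (M + 3) + 2 ^ (M + 2) * 2 ^ (M + 2) := by ring
      rw [this, hj]; ring

lemma gcd_choice (a b : ℤ) (Q : ℕ) (hQ : Q ≠ 0)
    (h : ∀ r : ℕ, r.Prime → r ∣ Q → (r : ℤ) ∣ a → ¬ (r : ℤ) ∣ b) :
    ∃ c : ℕ, ∀ k : ℤ, (Q : ℤ) ∣ k - c → IsCoprime (a + b * k ^ 2) (Q : ℤ) := by
  classical
  refine ⟨∏ r ∈ Q.primeFactors.filter (fun r : ℕ => ¬ ((r : ℤ) ∣ a)), r, fun k hk => ?_⟩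
  rw [Int.isCoprime_iff_gcd_eq_one]
  by_contra hg
  obtain ⟨r, hr, hrd⟩ := Nat.exists_prime_and_dvd hg
  have hr1 : (r : ℤ) ∣ a + b * k ^ 2 := (Int.natCast_dvd_natCast.mpr hrd).trans (Int.gcd_dvd_left ..)
  have hr2 : (r : ℤ) ∣ Q := (Int.natCast_dvd_natCast.mpr hrd).trans (Int.gcd_dvd_right ..)
  have hrQ : r ∣ Q := by exact_mod_cast hr2
  have hrk := hr2.trans hk
  have hrp : Prime (r : ℤ) := Nat.prime_iff_prime_int.mp hr
  by_cases hra : (r : ℤ) ∣ a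
  · have h3 : (r : ℤ) ∣ b * k ^ 2 := (dvd_add_right hra).mp hr1
    rcases hrp.dvd_or_dvd h3 with h4 | h4
    · exact h r hr hrQ hra h4
    · have h5 := hrp.dvd_of_dvd_pow h4
      have h6 : (r : ℤ) ∣ ((∏ r ∈ Q.primeFactors.filter (fun r : ℕ => ¬ ((r : ℤ) ∣ a)), r : ℕ) : ℤ) := by
        have := dvd_sub h5 hrk
        simpa using this
      rw [Int.natCast_dvd_natCast, hr.prime.dvd_finsetProd_iff] at h6
      obtain ⟨s, hs, hrs⟩ := h6
      simp only [Finset.mem_filter, Nat.mem_primeFactors] at hs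
      have := (Nat.prime_dvd_prime_iff_eq hr hs.1.1).mp hrs
      subst this
      exact hs.2 hra
  · have h6 : (r : ℤ) ∣ ((∏ r ∈ Q.primeFactors.filter (fun r : ℕ => ¬ ((r : ℤ) ∣ a)), r : ℕ) : ℤ) := by
      rw [Int.natCast_dvd_natCast]
      apply Finset.dvd_prod_of_mem (fun r => r)
      simp [hr, hrQ, hQ, hra]
    have h7 : (r : ℤ) ∣ k := by
      have := dvd_add hrk h6
      simpa using this
    apply hra
    have : (r : ℤ) ∣ b * k ^ 2 := (h7.pow (two_ne_zero)).mul_left _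
    exact (dvd_add_left this).mp hr1

lemma nonres_one (p : ℕ) [Fact p.Prime] (hmod : p % 8 = 7) (X Y : ℤ) (h : (p : ℤ) ∣ X ^ 2 + 1 * Y ^ 2) :
    (p : ℤ) ∣ X ∧ (p : ℤ) ∣ Y := by
  have key : (p : ℤ) ∣ Y := by
    by_contra hY
    rw [← ZMod.intCast_zmod_eq_zero_iff_dvd] at h hY
    push_cast at h
    have : IsSquare (-1 : ZMod p) := ⟨X / Y, by field_simp; linear_combination -h⟩
    rw [ZMod.exists_sq_eq_neg_one_iff] at this
    omega
  refine ⟨?_, key⟩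
  have hp := Nat.prime_iff_prime_int.mp (Fact.out : p.Prime)
  apply hp.dvd_of_dvd_pow (n := 2)
  exact (dvd_add_left ((key.pow two_ne_zero).mul_left _)).mp h

lemma nonres_two (p : ℕ) [Fact p.Prime] (hmod : p % 8 = 7) (X Y : ℤ) (h : (p : ℤ) ∣ X ^ 2 + 2 * Y ^ 2) :
    (p : ℤ) ∣ X ∧ (p : ℤ) ∣ Y := by
  have key : (p : ℤ) ∣ Y := by
    by_contra hY
    rw [← ZMod.intCast_zmod_eq_zero_iff_dvd] at h hY
    push_cast at h
    have : IsSquare (-2 : ZMod p) := ⟨X / Y, by field_simp; linear_combination -h⟩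
    rw [ZMod.exists_sq_eq_neg_two_iff (by omega)] at this
    omega
  refine ⟨?_, key⟩
  have hp := Nat.prime_iff_prime_int.mp (Fact.out : p.Prime)
  apply hp.dvd_of_dvd_pow (n := 2)
  exact (dvd_add_left ((key.pow two_ne_zero).mul_left _)).mp h

lemma den_dvd_aux (x : ℚ) (X N : ℤ) (hN : N ≠ 0) (h : x * N = X) : (x.den : ℤ) ∣ N := by
  have : x = X / N := by
    have : (N : ℚ) ≠ 0 := by exact_mod_cast hN
    field_simp; linarith
  rw [this, ← Rat.divInt_eq_div]
  exact Rat.den_dvd X N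

lemma integral_aux (p : ℕ) [Fact p.Prime] (c e : ℤ) (he : ¬ (p : ℤ) ∣ e)
    (hc : ∀ X Y : ℤ, (p : ℤ) ∣ X ^ 2 + c * Y ^ 2 → (p : ℤ) ∣ X ∧ (p : ℤ) ∣ Y)
    (a1 a2 a3 a4 : ℚ) (h : a1 ^ 2 + c * a2 ^ 2 + e * p * (a3 ^ 2 + c * a4 ^ 2) = 1) (N : ℕ)
    (hN : 0 < N) (X1 X2 X3 X4 : ℤ) (h1 : a1 * N = X1) (h2 : a2 * N = X2) (h3 : a3 * N = X3)
    (h4 : a4 * N = X4) : ¬ p ∣ a1.den ∧ ¬ p ∣ a2.den ∧ ¬ p ∣ a3.den ∧ ¬ p ∣ a4.den := by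
  induction N using Nat.strong_induction_on generalizing X1 X2 X3 X4 with
  | _ N ih =>
  have hp : p.Prime := Fact.out
  have hpp := Nat.prime_iff_prime_int.mp hp
  by_cases hpN : p ∣ N
  · have eq : X1 ^ 2 + c * X2 ^ 2 + e * p * (X3 ^ 2 + c * X4 ^ 2) = (N : ℤ) ^ 2 := by
      have : (X1 ^ 2 + c * X2 ^ 2 + e * p * (X3 ^ 2 + c * X4 ^ 2) : ℚ) = (N : ℚ) ^ 2 := by
        rw [← h1, ← h2, ← h3, ← h4]; linear_combination (N : ℚ) ^ 2 * h
      exact_mod_cast this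
    obtain ⟨n, rfl⟩ := hpN
    obtain ⟨⟨Y1, rfl⟩, ⟨Y2, rfl⟩⟩ := hc X1 X2 ⟨p * n ^ 2 - e * (X3 ^ 2 + c * X4 ^ 2), by
      push_cast at eq; linear_combination eq⟩
    have hp0 : (p : ℤ) ≠ 0 := hpp.ne_zero
    have d : (p : ℤ) ∣ e * (X3 ^ 2 + c * X4 ^ 2) := by
      refine ⟨n ^ 2 - Y1 ^ 2 - c * Y2 ^ 2, ?_⟩
      apply mul_left_cancel₀ hp0
      push_cast at eq; linear_combination eq
    obtain ⟨⟨Y3, rfl⟩, ⟨Y4, rfl⟩⟩ := hc X3 X4 ((hpp.dvd_or_dvd d).resolve_left he)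
    have hn : 0 < n := Nat.pos_of_mul_pos_left hN
    have hp0' : (p : ℚ) ≠ 0 := by exact_mod_cast hp0
    push_cast at h1 h2 h3 h4
    refine ih n ?_ hn Y1 Y2 Y3 Y4 ?_ ?_ ?_ ?_
    · nlinarith [hp.two_le]
    all_goals apply mul_left_cancel₀ hp0'
    · linear_combination h1
    · linear_combination h2
    · linear_combination h3
    · linear_combination h4
  · have hN0 : (N : ℤ) ≠ 0 := by omega
    refine ⟨?_, ?_, ?_, ?_⟩ <;> intro hd <;> apply hpN <;>
      rw [← Int.natCast_dvd_natCast] at hd ⊢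
    · exact hd.trans (den_dvd_aux a1 X1 N hN0 h1)
    · exact hd.trans (den_dvd_aux a2 X2 N hN0 h2)
    · exact hd.trans (den_dvd_aux a3 X3 N hN0 h3)
    · exact hd.trans (den_dvd_aux a4 X4 N hN0 h4)

lemma integral_main (p : ℕ) [Fact p.Prime] (c e : ℤ) (he : ¬ (p : ℤ) ∣ e)
    (hc : ∀ X Y : ℤ, (p : ℤ) ∣ X ^ 2 + c * Y ^ 2 → (p : ℤ) ∣ X ∧ (p : ℤ) ∣ Y)
    (a1 a2 a3 a4 : ℚ) (h : a1 ^ 2 + c * a2 ^ 2 + e * p * (a3 ^ 2 + c * a4 ^ 2) = 1) :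
    ¬ p ∣ a1.den ∧ ¬ p ∣ a2.den ∧ ¬ p ∣ a3.den ∧ ¬ p ∣ a4.den := by
  have e1 := Rat.mul_den_eq_num a1
  have e2 := Rat.mul_den_eq_num a2
  have e3 := Rat.mul_den_eq_num a3
  have e4 := Rat.mul_den_eq_num a4
  refine integral_aux p c e he hc a1 a2 a3 a4 h (a1.den * a2.den * a3.den * a4.den)
    (by have := a1.den_pos; have := a2.den_pos; have := a3.den_pos; have := a4.den_pos; positivity)
    (a1.num * a2.den * a3.den * a4.den) (a1.den * a2.num * a3.den * a4.den)
    (a1.den * a2.den * a3.num * a4.den) (a1.den * a2.den * a3.den * a4.num) ?_ ?_ ?_ ?_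
  · push_cast; rw [← e1]; ring
  · push_cast; rw [← e2]; ring
  · push_cast; rw [← e3]; ring
  · push_cast; rw [← e4]; ring


lemma two_adic (p : ℕ) (hmod : p % 8 = 7) (A B : ℤ) (hB : B ≠ 0) (hAB : IsCoprime A B) :
    ∃ (l k0 : ℤ) (M : ℕ), ∀ k : ℤ, (2 : ℤ) ^ M ∣ k - k0 → ∃ X Y : ℤ, Odd Y ∧
      (A * (1 + p * (k ^ 2 + l ^ 2)) - 2 * B) * Y = X * (B * (1 + p * (k ^ 2 + l ^ 2))) := by
  obtain ⟨P, hP⟩ : ∃ P : ℤ, (p : ℤ) = 8 * P + 7 := ⟨(p / 8 : ℕ), by omega⟩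
  rw [hP]
  obtain ⟨j, B', hB', rfl⟩ : ∃ (j : ℕ) (B' : ℤ), Odd B' ∧ B = 2 ^ j * B' := by
    have hf : FiniteMultiplicity 2 B := Int.finiteMultiplicity_iff.mpr ⟨by norm_num, hB⟩
    obtain ⟨c, hc, hc'⟩ := hf.exists_eq_pow_mul_and_not_dvd
    exact ⟨_, c, by rwa [← Int.not_even_iff_odd, even_iff_two_dvd], hc⟩
  rcases j with _ | j
  · refine ⟨0, 0, 1, ?_⟩
    rintro k ⟨i, hi⟩
    have hk : k = 2 * i := by linarith
    subst hk
    refine ⟨A * (1 + (8 * P + 7) * ((2 * i) ^ 2 + 0 ^ 2)) - 2 * (2 ^ 0 * B'),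
      2 ^ 0 * B' * (1 + (8 * P + 7) * ((2 * i) ^ 2 + 0 ^ 2)), ?_, by ring⟩
    rw [pow_zero, one_mul]
    exact hB'.mul ⟨(8 * P + 7) * (2 * i ^ 2), by ring⟩
  have hA : Odd A := by
    rw [← Int.not_even_iff_odd, even_iff_two_dvd]
    intro h2
    have := hAB.isUnit_of_dvd' h2 (by rw [pow_succ]; exact ⟨2 ^ j * B', by ring⟩)
    rw [Int.isUnit_iff] at this
    omega
  rcases j with _ | j
  · refine ⟨2, 1, 1, ?_⟩
    rintro k ⟨i, hi⟩
    have hk : k = 2 * i + 1 := by linarith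
    subst hk
    obtain ⟨d, hd, hd'⟩ : ∃ d : ℤ, Odd d ∧ 1 + (8 * P + 7) * ((2 * i + 1) ^ 2 + 2 ^ 2) = 4 * d := by
      refine ⟨9 + 7 * (i ^ 2 + i) + P * (10 + 8 * (i ^ 2 + i)), ?_, by ring⟩
      rcases Int.even_mul_succ_self i with ⟨s, hs⟩
      have : i ^ 2 + i = s + s := by linear_combination hs
      rw [this]
      exact ⟨4 + 7 * s + P * (5 + 8 * s), by ring⟩
    rw [hd']
    obtain ⟨s, hs⟩ := (hA.mul hd).sub_odd hB'
    exact ⟨s, B' * d, hB'.mul hd, by linear_combination 4 * (B' * d) * hs⟩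
  · have c2 : IsCoprime (2 : ℤ) A := by
      obtain ⟨s, rfl⟩ := hA
      exact ⟨-s, 1, by ring⟩
    have c3 : IsCoprime (2 : ℤ) (8 * P + 7) := ⟨-(4 * P + 3), 1, by ring⟩
    obtain ⟨u, A', hA'⟩ := c2.pow_left (m := 2 * (j + 2) + 3)
    obtain ⟨v, p', hp'⟩ := c3.pow_left (m := 2 * (j + 2) + 3)
    obtain ⟨r, hr⟩ := sq_two_pow (p' * (2 * (2 ^ (j + 2) * B') * A' - 1)) (by
      have e1 : (2 : ℤ) ^ (2 * (j + 2) + 3) = 8 * 2 ^ (2 * (j + 2)) := by ring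
      have e2 : (2 : ℤ) * 2 ^ (j + 2) = 8 * 2 ^ j := by ring
      rw [e1] at hp'
      refine ⟨v * 2 ^ (2 * (j + 2)) + p' * (P + 1) - p' * 2 ^ j * B' * A', ?_⟩
      linear_combination (-1 : ℤ) * hp' - p' * B' * A' * e2) (2 * (j + 2))
    refine ⟨0, r, 2 * (j + 2) + 3, ?_⟩
    intro k hk
    obtain ⟨D, hD⟩ : ∃ D : ℤ, D = 1 + (8 * P + 7) * (k ^ 2 + 0 ^ 2) := ⟨_, rfl⟩
    rw [← hD]
    have hdiv : (2 : ℤ) ^ (2 * (j + 2) + 3) ∣ A * D - 2 * (2 ^ (j + 2) * B') := by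
      obtain ⟨f, hf⟩ := hr
      obtain ⟨g, hg⟩ := hk
      have hk : k = r + 2 ^ (2 * (j + 2) + 3) * g := by linear_combination hg
      subst hk
      rw [hD]
      generalize (2 : ℤ) ^ (2 * (j + 2) + 3) = N at *
      generalize 2 * ((2 : ℤ) ^ (j + 2) * B') = b at *
      have h1 : r ^ 2 = p' * (b * A' - 1) + N * f := by linear_combination hf
      refine ⟨A * (8 * P + 7) * (2 * r * g + N * g ^ 2) + A * (8 * P + 7) * f
        - u * b - v * A * (b * A' - 1), ?_⟩
      linear_combination A * (8 * P + 7) * h1 + A * (b * A' - 1) * hp' + b * hA'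
    obtain ⟨g, hg⟩ := hdiv
    have hD2 : (2 : ℤ) ^ (j + 3) ∣ D := by
      apply (c2.pow_left (m := j + 3)).dvd_of_dvd_mul_left
      refine ⟨B' + 2 ^ (j + 4) * g, ?_⟩
      have e1 : (2 : ℤ) ^ (2 * (j + 2) + 3) = 2 ^ (j + 3) * 2 ^ (j + 4) := by ring
      have e2 : (2 : ℤ) * 2 ^ (j + 2) = 2 ^ (j + 3) := by ring
      linear_combination hg + g * e1 + B' * e2
    obtain ⟨d, rfl⟩ := hD2
    have hAd : A * d = B' + 2 * (2 ^ (j + 3) * g) := by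
      apply mul_left_cancel₀ (show (2 : ℤ) ^ (j + 3) ≠ 0 by positivity)
      have e1 : (2 : ℤ) ^ (2 * (j + 2) + 3) = 2 ^ (j + 3) * (2 * 2 ^ (j + 3)) := by ring
      have e2 : (2 : ℤ) * 2 ^ (j + 2) = 2 ^ (j + 3) := by ring
      linear_combination hg + g * e1 + B' * e2
    have hd : Odd d := by
      have : Odd (A * d) := by rw [hAd]; exact hB'.add_even ⟨2 ^ (j + 3) * g, by ring⟩
      exact (Int.odd_mul.mp this).2
    refine ⟨4 * g, B' * d, hB'.mul hd, ?_⟩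
    have e1 : (2 : ℤ) ^ (2 * (j + 2) + 3) = 4 * (2 ^ (j + 2) * 2 ^ (j + 3)) := by ring
    rw [hg, e1]; ring

/-- choice of the parameters of the definite part -/
lemma choice_main (p : ℕ) (hp : p.Prime) (hmod : p % 8 = 7) (z : ℚ) (hz : ¬ p ∣ z.den)
    (hz0 : 0 ≤ z) : ∃ (k l D : ℤ) (t : ℚ), D = 1 + p * (k ^ 2 + l ^ 2) ∧ 0 < D ∧
      z / 2 = (2 / D - 1) + t ∧ Odd (t.den : ℤ) ∧ ¬ p ∣ t.den ∧
      IsCoprime t.num (2 * p - 1) ∧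
      0 < 2 * p * t.num ^ 2 - (2 * p - 1) * (t.den : ℤ) ^ 2 := by
  obtain ⟨w, hw⟩ : ∃ w : ℚ, w = z / 2 + 1 := ⟨_, rfl⟩
  have hp7 : 7 ≤ p := by have := Nat.mod_le p 8; omega
  have hpp := Nat.prime_iff_prime_int.mp hp
  have hpB : ¬ (p : ℤ) ∣ w.den := by
    intro h
    have h1 := h.trans (den_dvd_aux w (z.num + 2 * z.den) (2 * z.den) (by simp) (by
      rw [hw]; push_cast; rw [← Rat.mul_den_eq_num z]; ring))
    rcases hpp.dvd_or_dvd h1 with h2 | h2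
    · have := Int.le_of_dvd (by norm_num) h2; omega
    · exact hz (by exact_mod_cast h2)
  have hAB : IsCoprime w.num (w.den : ℤ) := by
    rw [Int.isCoprime_iff_gcd_eq_one]; exact w.reduced
  obtain ⟨l, k0, M, h2ad⟩ := two_adic p hmod w.num w.den (by simp) hAB
  have hQc : ((2 * p - 1 : ℕ) : ℤ) = 2 * p - 1 := by push_cast [show 1 ≤ 2 * p by omega]; ring
  obtain ⟨c, hc⟩ := gcd_choice (w.num * (1 + p * l ^ 2) - 2 * w.den) (w.num * p) (2 * p - 1) (by omega) (by
    intro r hr hrQ hra hrb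
    have hrp := Nat.prime_iff_prime_int.mp hr
    have hrQ' : (r : ℤ) ∣ 2 * p - 1 := by rw [← hQc]; exact_mod_cast hrQ
    have hrA : (r : ℤ) ∣ w.num := by
      rcases hrp.dvd_or_dvd hrb with h | h
      · exact h
      · exfalso
        have : (r : ℤ) ∣ 1 := by
          have := dvd_sub (h.mul_left 2) hrQ'
          simpa using this
        exact hrp.not_dvd_one this
    have h3 : (r : ℤ) ∣ 2 * w.den := by
      have := dvd_sub (hrA.mul_right (1 + p * l ^ 2)) hra
      simpa using this
    rcases hrp.dvd_or_dvd h3 with h | h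
    · have h4 : (r : ℤ) ∣ 1 := by
        have := dvd_sub (h.mul_right p) hrQ'
        simpa using this
      exact hrp.not_dvd_one h4
    · exact hrp.not_isUnit (hAB.isUnit_of_dvd' hrA h))
  rw [hQc] at hc
  have hco : IsCoprime ((2 : ℤ) ^ M) (2 * p - 1) := by
    apply IsCoprime.pow_left
    exact ⟨p, -1, by ring⟩
  obtain ⟨k, hk3, hk1, hk2⟩ : ∃ k : ℤ, 3 ≤ k ∧ (2 : ℤ) ^ M ∣ k - k0 ∧ (2 * p - 1 : ℤ) ∣ k - c := by
    obtain ⟨u, v, huv⟩ := hco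
    obtain ⟨k1, hk1⟩ : ∃ k1 : ℤ, k1 = c * u * 2 ^ M + k0 * v * (2 * p - 1) := ⟨_, rfl⟩
    refine ⟨k1 + 2 ^ M * (2 * p - 1) * (|k1| + 3), ?_, ?_, ?_⟩
    · have h1 : (1 : ℤ) ≤ 2 ^ M := one_le_pow₀ (by norm_num)
      have h2 : (1 : ℤ) ≤ 2 * p - 1 := by omega
      have h3 : (1 : ℤ) ≤ 2 ^ M * (2 * p - 1) := by nlinarith
      have h4 := neg_abs_le k1
      have h5 := abs_nonneg k1
      nlinarith
    · refine ⟨c * u - k0 * u + (2 * p - 1) * (|k1| + 3), ?_⟩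
      rw [show k1 + 2 ^ M * (2 * p - 1) * (|k1| + 3) - k0 = (k1 - k0) + 2 ^ M * (2 * p - 1) * (|k1| + 3) by ring]
      generalize |k1| = K
      rw [hk1]
      linear_combination k0 * huv
    · refine ⟨k0 * v - c * v + 2 ^ M * (|k1| + 3), ?_⟩
      generalize |k1| = K
      rw [hk1]
      linear_combination c * huv
  obtain ⟨X, Y, hY, hXY⟩ := h2ad k hk1
  have hcop := hc k hk2
  obtain ⟨D, hD⟩ : ∃ D : ℤ, D = 1 + p * (k ^ 2 + l ^ 2) := ⟨_, rfl⟩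
  rw [← hD] at hXY
  have hD9 : 9 * (p : ℤ) < D := by
    rw [hD]
    have : 9 ≤ k ^ 2 := by nlinarith
    have := sq_nonneg l
    have : (p : ℤ) * 9 ≤ p * (k ^ 2 + l ^ 2) := by gcongr; linarith
    linarith
  have hDpos : 0 < D := by linarith [Int.natCast_nonneg p]
  have hDq : (D : ℚ) ≠ 0 := by exact_mod_cast hDpos.ne'
  obtain ⟨t, ht⟩ : ∃ t : ℚ, t = w - 2 / D := ⟨_, rfl⟩
  have hwB : w * w.den = w.num := Rat.mul_den_eq_num w
  have htE : t * (w.den * D : ℤ) = (w.num * D - 2 * w.den : ℤ) := by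
    rw [ht]; push_cast; rw [← hwB]; field_simp
  have hY0 : Y ≠ 0 := by rintro rfl; simp at hY
  have hB0 : (w.den : ℤ) ≠ 0 := by simp
  have htY : t * Y = X := by
    have h0 : ((w.den * D : ℤ) : ℚ) ≠ 0 := by exact_mod_cast mul_ne_zero hB0 hDpos.ne'
    apply mul_right_cancel₀ h0
    have : ((w.num * D - 2 * w.den : ℤ) : ℚ) * Y = X * (w.den * D : ℤ) := by exact_mod_cast hXY
    rw [← this, ← htE]; ring
  refine ⟨k, l, D, t, hD, hDpos, ?_, ?_, ?_, ?_, ?_⟩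
  · rw [ht, hw]; ring
  · obtain ⟨e, he⟩ := den_dvd_aux t X Y hY0 htY
    rw [he] at hY
    exact (Int.odd_mul.mp hY).1
  · intro h
    have h1 : (p : ℤ) ∣ t.den := by exact_mod_cast h
    have h2 := h1.trans (den_dvd_aux t _ _ (mul_ne_zero hB0 hDpos.ne') htE)
    rcases hpp.dvd_or_dvd h2 with h3 | h3
    · exact hpB h3
    · rw [hD] at h3
      have := (dvd_add_left (Dvd.intro _ rfl)).mp h3
      exact hpp.not_dvd_one this
  · have hnum : t.num ∣ w.num * D - 2 * w.den := by
      have h1 : t = ((w.num * D - 2 * w.den : ℤ) : ℚ) / ((w.den * D : ℤ) : ℚ) := by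
        rw [← htE]
        have h0 : ((w.den * D : ℤ) : ℚ) ≠ 0 := by exact_mod_cast mul_ne_zero hB0 hDpos.ne'
        field_simp
      rw [h1, ← Rat.divInt_eq_div]
      exact Rat.num_dvd _ (mul_ne_zero hB0 hDpos.ne')
    refine IsCoprime.of_isCoprime_of_dvd_left ?_ hnum
    convert hcop using 1
    rw [hD]; ring
  · have hpq : (7 : ℚ) ≤ p := by exact_mod_cast hp7
    have hDq' : (9 : ℚ) * p < D := by exact_mod_cast hD9
    have h1 : (2 : ℚ) / D < 2 / (9 * p) := by
      apply div_lt_div_of_pos_left <;> linarith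
    have h2 : 1 - 2 / (9 * (p : ℚ)) < t := by rw [ht, hw]; linarith
    have h3 : (2 : ℚ) / (9 * p) * p = 2 / 9 := by field_simp
    have h4 : 0 < (2 : ℚ) / (9 * p) := by positivity
    have h5 : (2 : ℚ) / (9 * p) ≤ 1 := by rw [div_le_one (by positivity)]; linarith
    have h6 : 2 * (p : ℚ) - 1 < 2 * p * t ^ 2 := by
      have : (1 - 2 / (9 * (p : ℚ))) ^ 2 < t ^ 2 := by
        apply pow_lt_pow_left₀ h2 (by linarith) two_ne_zero
      have h7 : 2 * (p : ℚ) * (1 - 2 / (9 * (p : ℚ))) ^ 2 < 2 * p * t ^ 2 := by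
        apply mul_lt_mul_of_pos_left this; linarith
      generalize (2 : ℚ) / (9 * p) = e at *
      nlinarith
    have hE : (0 : ℚ) < t.den := by exact_mod_cast t.den_pos
    have h8 : 0 < 2 * (p : ℚ) * t.num ^ 2 - (2 * p - 1) * (t.den : ℚ) ^ 2 := by
      rw [← Rat.mul_den_eq_num t]
      have : 0 < (2 * p * t ^ 2 - (2 * p - 1)) * (t.den : ℚ) ^ 2 := by
        apply mul_pos (by linarith); positivity
      linarith
    exact_mod_cast h8

lemma crt_sq (n b1 b2 : ℤ) (h : IsCoprime b1 b2) (h1 : ∃ l, b1 ∣ n * l ^ 2 - 1)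
    (h2 : ∃ l, b2 ∣ n * l ^ 2 - 1) : ∃ l, b1 * b2 ∣ n * l ^ 2 - 1 := by
  obtain ⟨l1, h1⟩ := h1
  obtain ⟨l2, h2⟩ := h2
  obtain ⟨u, v, huv⟩ := h
  refine ⟨l2 * (u * b1) + l1 * (v * b2), IsCoprime.mul_dvd ⟨u, v, huv⟩ ?_ ?_⟩
  · have e : l2 * (u * b1) + l1 * (v * b2) = l1 + b1 * (u * (l2 - l1)) := by
      linear_combination l1 * huv
    rw [e, show n * (l1 + b1 * (u * (l2 - l1))) ^ 2 - 1 = (n * l1 ^ 2 - 1) +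
      b1 * (n * (2 * l1 * (u * (l2 - l1)) + b1 * (u * (l2 - l1)) ^ 2)) by ring]
    exact dvd_add h1 (Dvd.intro _ rfl)
  · have e : l2 * (u * b1) + l1 * (v * b2) = l2 + b2 * (v * (l1 - l2)) := by
      linear_combination l2 * huv
    rw [e, show n * (l2 + b2 * (v * (l1 - l2))) ^ 2 - 1 = (n * l2 ^ 2 - 1) +
      b2 * (n * (2 * l2 * (v * (l1 - l2)) + b2 * (v * (l1 - l2)) ^ 2)) by ring]
    exact dvd_add h2 (Dvd.intro _ rfl)

lemma inv_sq (n s b j : ℤ) (hn : n = s ^ 2 + b * j) (h : IsCoprime s b) :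
    ∃ l, b ∣ n * l ^ 2 - 1 := by
  obtain ⟨u, v, huv⟩ := h
  refine ⟨u, j * u ^ 2 - v * (u * s + 1), ?_⟩
  rw [hn]
  linear_combination (u * s + 1) * huv

lemma symbol_aux (p Q q n : ℕ) [Fact q.Prime] (T E : ℤ) (hmod : p % 4 = 3)
    (hQ : (Q : ℤ) = 2 * p - 1) (hq : q % 4 = 3)
    (hn : (n : ℤ) = 2 * p * T ^ 2 - Q * E ^ 2) (hodd : Odd n) (hEp : IsCoprime E (p : ℤ))
    (hTQ : IsCoprime T (Q : ℤ)) (hinv : (n : ℤ) ∣ p * Q * q - 1) :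
    IsSquare ((n : ℤ) : ZMod q) := by
  apply ZMod.isSquare_of_jacobiSym_eq_one
  have hQ4 : Q % 4 = 1 := by omega
  have h1 : jacobiSym p n * jacobiSym Q n * jacobiSym q n = 1 := by
    rw [← jacobiSym.mul_left, ← jacobiSym.mul_left, ← jacobiSym.one_left n]
    apply jacobiSym.mod_left'
    exact (Int.modEq_iff_dvd.mpr hinv).symm
  have h2 : jacobiSym Q n = 1 := by
    rw [jacobiSym.quadratic_reciprocity_one_mod_four hQ4 hodd]
    rw [← jacobiSym.sq_one' (Int.isCoprime_iff_gcd_eq_one.mp hTQ)]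
    apply jacobiSym.mod_left'
    apply Int.ModEq.symm
    rw [Int.modEq_iff_dvd]
    refine ⟨T ^ 2 - E ^ 2, ?_⟩
    rw [hn]; linear_combination -T ^ 2 * hQ
  have h3 : jacobiSym n p = 1 := by
    rw [← jacobiSym.sq_one' (Int.isCoprime_iff_gcd_eq_one.mp hEp)]
    apply jacobiSym.mod_left'
    apply Int.ModEq.symm
    rw [Int.modEq_iff_dvd]
    refine ⟨2 * T ^ 2 - 2 * E ^ 2, ?_⟩
    rw [hn]; linear_combination -E ^ 2 * hQ
  have hpodd : Odd p := by rw [Nat.odd_iff]; omega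
  have hqodd : Odd q := by rw [Nat.odd_iff]; omega
  have : n % 4 = 1 ∨ n % 4 = 3 := by rw [Nat.odd_iff] at hodd; omega
  rcases this with h4 | h4
  · rw [jacobiSym.quadratic_reciprocity_one_mod_four h4 hqodd]
    rw [jacobiSym.quadratic_reciprocity_one_mod_four h4 hpodd] at h3
    rw [h2, h3] at h1
    linarith
  · rw [jacobiSym.quadratic_reciprocity_three_mod_four h4 hq]
    rw [jacobiSym.quadratic_reciprocity_three_mod_four h4 hmod] at h3
    have h5 : jacobiSym p n = -1 := by linarith
    rw [h2, h5] at h1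
    linarith

lemma repr_main (p : ℕ) (hp : p.Prime) (hmod : p % 8 = 7) (T E : ℤ) (hE : Odd E)
    (hEp : ¬ (p : ℤ) ∣ E) (hTQ : IsCoprime T (2 * p - 1))
    (hpos : 0 < 2 * p * T ^ 2 - (2 * p - 1) * E ^ 2) :
    ∃ U y3 y4 : ℚ, (2 * p * T ^ 2 - (2 * p - 1) * E ^ 2 : ℚ) =
      U ^ 2 + p * (2 * p - 1) * (y3 ^ 2 - 2 * p * y4 ^ 2) := by
  have : Fact p.Prime := ⟨hp⟩
  have hp7 : 7 ≤ p := by have := Nat.mod_le p 8; omega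
  have hpp := Nat.prime_iff_prime_int.mp hp
  obtain ⟨Q, hQ⟩ : ∃ Q : ℕ, (Q : ℤ) = 2 * p - 1 := ⟨2 * p - 1, by
    push_cast [show 1 ≤ 2 * p by omega]; ring⟩
  obtain ⟨n, hn⟩ := Int.eq_ofNat_of_zero_le hpos.le
  have hn0 : 0 < n := by omega
  rw [← hQ] at hTQ
  have hn' : (n : ℤ) = 2 * p * T ^ 2 - Q * E ^ 2 := by rw [hQ]; exact hn.symm
  have hEp' : IsCoprime E (p : ℤ) := ((Prime.coprime_iff_not_dvd hpp).mpr hEp).symm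
  have hnodd : Odd (n : ℤ) := by
    rw [hn']
    apply Even.sub_odd
    · exact ⟨p * T ^ 2, by ring⟩
    · exact Odd.mul ⟨p - 1, by rw [hQ]; ring⟩ hE.pow
  have hnodd' : Odd n := by exact_mod_cast hnodd
  have hnp : IsCoprime (p : ℤ) n := by
    have : (n : ℤ) = E ^ 2 + p * (2 * T ^ 2 - 2 * E ^ 2) := by
      rw [hn']; linear_combination -E ^ 2 * hQ
    rw [this]
    exact (IsCoprime.add_mul_left_left hEp'.pow_left _).symm
  have hnQ : IsCoprime (Q : ℤ) n := by
    have : (n : ℤ) = T ^ 2 + Q * (T ^ 2 - E ^ 2) := by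
      rw [hn']; linear_combination -T ^ 2 * hQ
    rw [this]
    exact (IsCoprime.add_mul_left_left hTQ.pow_left _).symm
  have hn8p : IsCoprime (8 * p : ℤ) n := by
    refine IsCoprime.mul_left ?_ hnp
    obtain ⟨s, hs⟩ := hnodd
    have : IsCoprime (2 : ℤ) n := ⟨-s, 1, by rw [hs]; ring⟩
    simpa using this.pow_left (m := 3)
  have hpQ : IsCoprime (p : ℤ) Q := ⟨2, -1, by rw [hQ]; ring⟩
  -- the auxiliary prime
  obtain ⟨q, hqgt, hqp, hq8, hqn⟩ : ∃ q : ℕ, Q + n < q ∧ q.Prime ∧ (8 * p : ℤ) ∣ q + 1 ∧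
      (n : ℤ) ∣ p * Q * q - 1 := by
    obtain ⟨α, β, hαβ⟩ := hnp.mul_left hnQ
    obtain ⟨u, v, huv⟩ := hn8p
    obtain ⟨r, hr⟩ : ∃ r : ℤ, r = α * u * (8 * p) - v * n := ⟨_, rfl⟩
    have hr1 : r = -1 + (8 * p) * (α * u + u) := by rw [hr]; linear_combination -huv
    have hr2 : r = α + n * (-v - α * v) := by rw [hr]; linear_combination α * huv
    have hco : IsCoprime r ((8 * p * n : ℕ) : ℤ) := by
      push_cast
      refine IsCoprime.mul_right ?_ ?_
      · rw [hr1]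
        refine IsCoprime.add_mul_left_left ?_ _
        exact (isCoprime_one_left).neg_left
      · rw [hr2]
        refine IsCoprime.add_mul_left_left ?_ _
        exact ⟨p * Q, β, by linear_combination hαβ⟩
    obtain ⟨q, hq1, hq2, hq3⟩ := Nat.forall_exists_prime_gt_and_zmodEq (Q + n)
      (q := 8 * p * n) (a := r) (by positivity) hco
    obtain ⟨j, hj⟩ := Int.modEq_iff_dvd.mp hq3
    push_cast at hj
    refine ⟨q, hq1, hq2, ⟨α * u + u - n * j, ?_⟩, ⟨p * Q * (-v - α * v - 8 * p * j) - β, ?_⟩⟩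
    · linear_combination hr1 - hj
    · linear_combination p * Q * (hr2 - hj) + hαβ
  have : Fact q.Prime := ⟨hqp⟩
  have hqq := Nat.prime_iff_prime_int.mp hqp
  have hq87 : q % 8 = 7 := by
    obtain ⟨j, hj⟩ := hq8
    have : (8 : ℤ) ∣ q + 1 := ⟨p * j, by rw [hj]; ring⟩
    omega
  have hqp' : p ≠ q := by omega
  have hcqp : Nat.Coprime q p := (Nat.coprime_primes hqp hp).mpr (Ne.symm hqp')
  have hcqQ : Nat.Coprime q Q := by
    apply (Nat.Prime.coprime_iff_not_dvd hqp).mpr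
    intro h
    have := Nat.le_of_dvd (by omega) h
    omega
  have hcqn : Nat.Coprime q n := by
    apply (Nat.Prime.coprime_iff_not_dvd hqp).mpr
    intro h
    have := Nat.le_of_dvd (by omega) h
    omega
  have hsqn := symbol_aux p Q q n T E (by omega) hQ (by omega) hn' hnodd' hEp' hTQ hqn
  have hsq2p : IsSquare ((2 * p : ℤ) : ZMod q) := by
    push_cast
    apply IsSquare.mul
    · rw [ZMod.exists_sq_eq_two_iff (by omega)]; right; exact hq87
    · rw [ZMod.exists_sq_eq_prime_iff_of_mod_four_eq_three (by omega) (by omega) (Ne.symm hqp')]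
      have : (q : ZMod p) = -1 := by
        have h1 : (p : ℤ) ∣ q + 1 := (Dvd.intro_left 8 rfl).trans hq8
        rw [← ZMod.intCast_zmod_eq_zero_iff_dvd] at h1
        push_cast at h1
        linear_combination h1
      rw [this, ZMod.exists_sq_eq_neg_one_iff]
      omega
  -- second conic
  obtain ⟨x', y', z', hne', heq'⟩ : ∃ x y z : ℤ, ¬ (x = 0 ∧ y = 0 ∧ z = 0) ∧
      ((1 : ℕ) : ℤ) * x ^ 2 + q * y ^ 2 = (2 * p : ℕ) * z ^ 2 := by
    obtain ⟨r, hr⟩ := hsq2p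
    obtain ⟨l, rfl⟩ := ZMod.intCast_surjective r
    refine legendre_aux_s17 1 q (2 * p) one_pos hqp.pos (by omega) (Nat.coprime_one_left _)
      (Nat.coprime_one_left _) ?_ 0 l 1 (by simp) ?_ ?_
    · refine Nat.Coprime.mul_right ?_ hcqp
      rw [Nat.coprime_two_right, Nat.odd_iff]; omega
    · rw [← ZMod.intCast_zmod_eq_zero_iff_dvd]
      push_cast at hr ⊢
      linear_combination -hr
    · push_cast
      obtain ⟨j, hj⟩ := hq8
      exact ⟨4 * j, by linear_combination hj⟩
  obtain ⟨x, y, z, hne, heq⟩ : ∃ x y z : ℤ, ¬ (x = 0 ∧ y = 0 ∧ z = 0) ∧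
      (n : ℤ) * x ^ 2 + (p * Q * q : ℕ) * y ^ 2 = ((1 : ℕ) : ℤ) * z ^ 2 := by
    obtain ⟨l, hl⟩ : ∃ l : ℤ, (p * Q * q : ℤ) ∣ n * l ^ 2 - 1 := by
      apply crt_sq
      · exact IsCoprime.mul_left (Nat.isCoprime_iff_coprime.mpr hcqp.symm)
          (Nat.isCoprime_iff_coprime.mpr hcqQ.symm)
      · apply crt_sq _ _ _ hpQ
        · exact inv_sq n E p (2 * T ^ 2 - 2 * E ^ 2) (by rw [hn']; linear_combination -E ^ 2 * hQ) hEp'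
        · exact inv_sq n T Q (T ^ 2 - E ^ 2) (by rw [hn']; linear_combination -T ^ 2 * hQ) hTQ
      · obtain ⟨r, hr⟩ := hsqn
        obtain ⟨s, rfl⟩ := ZMod.intCast_surjective r
        have h1 : (q : ℤ) ∣ n - s ^ 2 := by
          rw [← ZMod.intCast_zmod_eq_zero_iff_dvd]
          push_cast at hr ⊢
          linear_combination hr
        obtain ⟨j, hj⟩ := h1
        refine inv_sq n s q j (by linear_combination hj) ?_
        apply IsCoprime.symm
        rw [Prime.coprime_iff_not_dvd hqq]
        rintro ⟨i, rfl⟩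
        have : (q : ℤ) ∣ n := ⟨j + q * i ^ 2, by linear_combination hj⟩
        have : q ∣ n := by exact_mod_cast this
        exact (Nat.Prime.coprime_iff_not_dvd hqp).mp hcqn this
    refine legendre_aux_s17 n (p * Q * q) 1 hn0 (by
      have := hqp.pos
      have : 0 < Q := by omega
      positivity) one_pos ?_
      (Nat.coprime_one_right _) (Nat.coprime_one_right _) 1 l 0 ?_ ?_ (by simp)
    · refine Nat.Coprime.mul_right (Nat.Coprime.mul_right ?_ ?_) hcqn.symm
      · exact (Nat.isCoprime_iff_coprime.mp hnp).symm
      · exact (Nat.isCoprime_iff_coprime.mp hnQ).symm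
    · push_cast; simpa using hqn
    · push_cast; exact hl
  have hx0 : x ≠ 0 := by
    rintro rfl
    by_cases hy : y = 0
    · subst hy
      have : z = 0 := by simpa using heq.symm
      exact hne ⟨rfl, rfl, this⟩
    have hy' : (y : ℚ) ≠ 0 := by exact_mod_cast hy
    have hsq : IsSquare ((p * Q * q : ℕ) : ℚ) := by
      refine ⟨z / y, ?_⟩
      have h1 : ((p * Q * q : ℕ) : ℚ) * y ^ 2 = z ^ 2 := by
        have : ((p * Q * q : ℕ) : ℤ) * y ^ 2 = z ^ 2 := by simpa using heq
        exact_mod_cast this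
      field_simp
      exact h1
    rw [Rat.isSquare_natCast_iff] at hsq
    obtain ⟨r, hr⟩ := hsq
    have h1 : q ∣ r := by
      have : q ∣ r * r := by rw [← hr]; exact Dvd.intro_left _ rfl
      rcases hqp.dvd_mul.mp this with h | h <;> exact h
    obtain ⟨i, rfl⟩ := h1
    have h2 : q ∣ p * Q := ⟨i * i, by
      apply Nat.eq_of_mul_eq_mul_right hqp.pos; rw [hr]; ring⟩
    exact (Nat.Prime.coprime_iff_not_dvd hqp).mp (hcqp.mul_right hcqQ) h2
  have hy0 : y' ≠ 0 := by
    rintro rfl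
    by_cases hy : z' = 0
    · subst hy
      have : x' = 0 := by simpa using heq'
      exact hne' ⟨this, rfl, rfl⟩
    have hy' : (z' : ℚ) ≠ 0 := by exact_mod_cast hy
    have hsq : IsSquare ((2 * p : ℕ) : ℚ) := by
      refine ⟨x' / z', ?_⟩
      have h1 : (x' : ℚ) ^ 2 = ((2 * p : ℕ) : ℚ) * z' ^ 2 := by
        have : x' ^ 2 = ((2 * p : ℕ) : ℤ) * z' ^ 2 := by simpa using heq'
        exact_mod_cast this
      field_simp
      exact h1.symm
    rw [Rat.isSquare_natCast_iff] at hsq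
    obtain ⟨r, hr⟩ := hsq
    have h1 : p ∣ r := by
      have : p ∣ r * r := by rw [← hr]; exact Dvd.intro_left _ rfl
      rcases hp.dvd_mul.mp this with h | h <;> exact h
    obtain ⟨i, rfl⟩ := h1
    have h2 : p ∣ 2 := ⟨i * i, by
      apply Nat.eq_of_mul_eq_mul_right hp.pos; rw [hr]; ring⟩
    have := Nat.le_of_dvd (by norm_num) h2
    omega
  have hxq : (x : ℚ) ≠ 0 := by exact_mod_cast hx0
  have hyq : (y' : ℚ) ≠ 0 := by exact_mod_cast hy0
  have hQq : (Q : ℚ) = 2 * p - 1 := by exact_mod_cast hQ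
  have hnq : (2 * p * T ^ 2 - (2 * p - 1) * E ^ 2 : ℚ) = n := by exact_mod_cast hn
  have e1 : (n : ℚ) * x ^ 2 + p * Q * q * y ^ 2 = z ^ 2 := by
    have := heq
    push_cast at this
    rw [one_mul] at this
    exact_mod_cast this
  have e2 : (x' : ℚ) ^ 2 + q * y' ^ 2 = 2 * p * z' ^ 2 := by
    have := heq'
    push_cast at this
    rw [one_mul] at this
    exact_mod_cast this
  refine ⟨z / x, x' * y / (y' * x), z' * y / (y' * x), ?_⟩
  rw [hnq, ← hQq]
  field_simp
  linear_combination (y' : ℚ) ^ 2 * e1 - p * Q * y ^ 2 * e2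

lemma exists_repr (p : ℕ) (hp : p.Prime) (hmod : p % 8 = 7) (z : ℚ) (hz : ¬ p ∣ z.den)
    (hz0 : 0 ≤ z) : ∃ x1 x2 x3 x4 y1 y2 y3 y4 : ℚ, z = 2 * (x1 + x2 + y1 + y2) ∧
      fab (-1) (-(p : ℚ)) x1 x2 x3 x4 = 0 ∧ fab (2 * (p : ℚ)) (p : ℚ) y1 y2 y3 y4 = 0 := by
  obtain ⟨k, l, D, t, hD, hDpos, hzt, hodd, hpt, hcop, hpos⟩ := choice_main p hp hmod z hz hz0
  obtain ⟨U, y3, y4, hU⟩ := repr_main p hp hmod t.num t.den hodd (by exact_mod_cast hpt) hcop hpos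
  have hDq : (D : ℚ) ≠ 0 := by exact_mod_cast hDpos.ne'
  have hDD : (D : ℚ) = 1 + p * (k ^ 2 + l ^ 2) := by exact_mod_cast hD
  have hE : (t.den : ℚ) ≠ 0 := by simp
  have hp1 : (1 : ℚ) < p := by exact_mod_cast hp.one_lt
  have hQ : (2 * p - 1 : ℚ) ≠ 0 := by linarith
  push_cast at hU
  rw [← Rat.mul_den_eq_num t] at hU
  generalize (t.den : ℚ) = E at *
  have hU' : 2 * p * t ^ 2 - (2 * p - 1) = (U / E) ^ 2 +
      p * (2 * p - 1) * ((y3 / E) ^ 2 - 2 * p * (y4 / E) ^ 2) := by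
    field_simp
    linear_combination hU
  refine ⟨2 / D - 1, 0, 2 * k / D, 2 * l / D, t - (U / E - t) / (2 * p - 1),
    (U / E - t) / (2 * p - 1), y3 / E, y4 / E, by linear_combination 2 * hzt, ?_, ?_⟩
  · unfold fab
    field_simp
    linear_combination (-4 : ℚ) * hDD
  · unfold fab
    generalize U / E = u at *
    generalize y3 / E = a at *
    generalize y4 / E = b at *
    have : (2 * p - 1 : ℚ) * ((t - (u - t) / (2 * p - 1)) ^ 2 - 2 * p * ((u - t) / (2 * p - 1)) ^ 2
      - p * a ^ 2 + 2 * p * p * b ^ 2 - 1) = 0 := by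
      have h : (t - (u - t) / (2 * p - 1)) ^ 2 - 2 * p * ((u - t) / (2 * p - 1)) ^ 2 =
        (2 * p * t ^ 2 - u ^ 2) / (2 * p - 1) := by
        field_simp
        ring
      rw [h]
      field_simp
      linear_combination hU'
    exact (mul_eq_zero.mp this).resolve_left hQ

lemma zloc_add (p : ℕ) (hp : p.Prime) (x y : ℚ) (hx : ¬ p ∣ x.den) (hy : ¬ p ∣ y.den) :
    ¬ p ∣ (x + y).den := fun h =>
  (hp.dvd_mul.mp (h.trans (Rat.add_den_dvd x y))).elim hx hy

lemma zloc_mul (p : ℕ) (hp : p.Prime) (x y : ℚ) (hx : ¬ p ∣ x.den) (hy : ¬ p ∣ y.den) :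
    ¬ p ∣ (x * y).den := fun h =>
  (hp.dvd_mul.mp (h.trans (Rat.mul_den_dvd x y))).elim hx hy

/-- For a prime `p ≡ 7 (mod 8)`, `ℤ_(p)` equals the set of
rationals of the form `2(x₁₁ + x₁₂ + y₁₁ + y₁₂)` where
`f₍₋₁,₋p₎(x₁ⱼ)² + f₍₋₁,₋p₎(x₂ⱼ)² + f₍₂p,p₎(y₁ⱼ)² + f₍₂p,p₎(y₂ⱼ)² = 0`. -/
theorem stmt17 (p : ℕ) (hp : p.Prime) (hmod : p % 8 = 7) :
    Zloc p =
      {z : ℚ | ∃ x₁₁ x₁₂ x₁₃ x₁₄ x₂₁ x₂₂ x₂₃ x₂₄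
          y₁₁ y₁₂ y₁₃ y₁₄ y₂₁ y₂₂ y₂₃ y₂₄ : ℚ,
        z = 2 * (x₁₁ + x₁₂ + y₁₁ + y₁₂) ∧
        fab (-1) (-(p : ℚ)) x₁₁ x₁₂ x₁₃ x₁₄ ^ 2 +
          fab (-1) (-(p : ℚ)) x₂₁ x₂₂ x₂₃ x₂₄ ^ 2 +
          fab (2 * (p : ℚ)) (p : ℚ) y₁₁ y₁₂ y₁₃ y₁₄ ^ 2 +
          fab (2 * (p : ℚ)) (p : ℚ) y₂₁ y₂₂ y₂₃ y₂₄ ^ 2 = 0} := by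

  have : Fact p.Prime := ⟨hp⟩
  have hpp := Nat.prime_iff_prime_int.mp hp
  ext z
  simp only [Zloc, Set.mem_ofPred_eq]
  constructor
  · intro hz
    have triv1 : fab (-1) (-(p : ℚ)) 1 0 0 0 = 0 := by unfold fab; ring
    have triv2 : fab (2 * (p : ℚ)) (p : ℚ) 1 0 0 0 = 0 := by unfold fab; ring
    rcases le_total 0 z with h0 | h0
    · obtain ⟨x1, x2, x3, x4, y1, y2, y3, y4, h, hx, hy⟩ := exists_repr p hp hmod z hz h0
      refine ⟨x1, x2, x3, x4, 1, 0, 0, 0, y1, y2, y3, y4, 1, 0, 0, 0, h, ?_⟩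
      rw [hx, hy, triv1, triv2]; ring
    · obtain ⟨x1, x2, x3, x4, y1, y2, y3, y4, h, hx, hy⟩ :=
        exists_repr p hp hmod (-z) (by simpa using hz) (by linarith)
      refine ⟨-x1, -x2, x3, x4, 1, 0, 0, 0, -y1, -y2, y3, y4, 1, 0, 0, 0, by linarith, ?_⟩
      have hx' : fab (-1) (-(p : ℚ)) (-x1) (-x2) x3 x4 = 0 := by
        rw [← hx]; unfold fab; ring
      have hy' : fab (2 * (p : ℚ)) (p : ℚ) (-y1) (-y2) y3 y4 = 0 := by
        rw [← hy]; unfold fab; ring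
      rw [hx', hy', triv1, triv2]; ring
  · rintro ⟨x1, x2, x3, x4, w1, w2, w3, w4, y1, y2, y3, y4, v1, v2, v3, v4, rfl, h⟩
    have hx : fab (-1) (-(p : ℚ)) x1 x2 x3 x4 = 0 := by
      apply pow_eq_zero_iff (two_ne_zero) |>.mp
      apply le_antisymm _ (sq_nonneg _)
      nlinarith [sq_nonneg (fab (-1) (-(p : ℚ)) w1 w2 w3 w4),
        sq_nonneg (fab (2 * (p : ℚ)) (p : ℚ) y1 y2 y3 y4),
        sq_nonneg (fab (2 * (p : ℚ)) (p : ℚ) v1 v2 v3 v4)]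
    have hy : fab (2 * (p : ℚ)) (p : ℚ) y1 y2 y3 y4 = 0 := by
      apply pow_eq_zero_iff (two_ne_zero) |>.mp
      apply le_antisymm _ (sq_nonneg _)
      nlinarith [sq_nonneg (fab (-1) (-(p : ℚ)) w1 w2 w3 w4),
        sq_nonneg (fab (-1) (-(p : ℚ)) x1 x2 x3 x4),
        sq_nonneg (fab (2 * (p : ℚ)) (p : ℚ) v1 v2 v3 v4)]
    unfold fab at hx hy
    obtain ⟨i1, i2, -, -⟩ := integral_main p 1 1 hpp.not_dvd_one
      (fun X Y hXY => nonres_one p hmod X Y hXY) x1 x2 x3 x4 (by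
        push_cast; linear_combination hx)
    obtain ⟨j1, -, -, j2⟩ := integral_main p 2 (-1) (by
        rw [dvd_neg]; exact hpp.not_dvd_one)
      (fun X Y hXY => nonres_two p hmod X Y hXY) y1 (p * y4) y3 y2 (by
        push_cast; linear_combination hy)
    apply zloc_mul p hp
    · have : (2 : ℚ).den = 1 := rfl
      rw [this]
      exact hp.one_lt.not_ge ∘ Nat.le_of_dvd one_pos
    · exact zloc_add p hp _ _ (zloc_add p hp _ _ (zloc_add p hp _ _ i1 i2) j1) j2
end
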